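/- arXiv:0712.0576 — 3 statements merged into one kernel-verified Lean document; each statement's English description precedes it below -/
import Mathlib

section
/- Let α > 0 and let Y be a positive random variable with EY^{α+δ} < ∞ for some δ > 0. Then Y is α-regular variation determining if and only if E[Y^{α+iθ}] ≠ 0 for all θ ∈ ℝ. -/
/-!
Write `T` and `S` for the tails of `Z` and of `X = Y Z`; then `S x = E[T (x / Y)]`. In logarithmic
coordinates this is a convolution with the law of `log Y`, and after tilting by `y ^ α` the Fourier
transform of the convolving measure `m = logTilt α ν` is the Mellin transform `θ ↦ E[Y ^ (α + iθ)]`.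

Nonvanishing is sufficient. Suppose `S` is regularly varying with exponent `α`. Since `T` is
dominated by a rescaling of `S` (`exists_tail_le`), Helly's theorem (`helly_antitone`) yields, along
a subsequence of any sequence `s → ∞`, a limit `g u` of `T (s * exp u) / S s`. A Potter bound
(`potter_bound`) and the moment of order `α + δ` allow dominated convergence, which gives
`h * m = 1` for the bounded function `h u = exp (α * u) * g u`. The moment condition makes the
transform of `m` smooth, and it has no zeros, so a test function divided by it is still a test
function. Wiener's argument therefore needs no more than Schwartz functions
(`integral_mul_fourierInv_of_conv_eq_one`), and `h` is the constant `1 / E[Y ^ α]` at its continuity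
points (`eq_of_conv_eq_one`). Hence `T / S → 1 / E[Y ^ α]`, and `T` is regularly varying.

Nonvanishing is necessary. If `E[Y ^ (α + iθ)] = 0`, then `θ ≠ 0`, and the random variable `Z` with
tail `x ^ (-α) * (1 + a * cos (θ * log x)) / (1 + a)` for `x ≥ 1` (with `a > 0` small, so that this
is decreasing) is not regularly varying. The oscillating part contributes the real part of a multiple
of `E[Y ^ (α + iθ)]` to the tail of `Y Z`, up to `o(x ^ (-α))`; hence
`x ^ α * S x → E[Y ^ α] / (1 + a)`, and `Y Z` is regularly varying (`mellin_ne_zero_of_rvDetRV`).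
-/

open MeasureTheory Set Filter ProbabilityTheory
open scoped ENNReal Topology

noncomputable section

/-- Multiplicative convolution of two measures (on `(0,∞)`, modeled as measures on `ℝ`):
`(ν ⊛ ρ)(B) = ∫ ν(x⁻¹ B) ρ(dx)`. -/
def mulConv (ν ρ : Measure ℝ) : Measure ℝ :=
  ρ.bind fun x => ν.map fun y => x * y

/-- The measure `ν_α` on `(0,∞)`, with density `|α| x^{-(α+1)}` w.r.t. Lebesgue measure
when `α ≠ 0`, and density `x⁻¹` when `α = 0`. -/
def nuAlpha (α : ℝ) : Measure ℝ :=
  (volume.restrict (Ioi (0:ℝ))).withDensity fun x =>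
    ENNReal.ofReal (if α = 0 then x⁻¹ else |α| * x ^ (-(α + 1)))

/-- `L` is slowly varying at infinity: `L(cx)/L(x) → 1` as `x → ∞`, for every `c > 0`. -/
def SlowlyVarying (L : ℝ → ℝ) : Prop :=
  ∀ c : ℝ, 0 < c → Tendsto (fun x => L (c * x) / L x) atTop (nhds 1)

/-- The measure `μ` has a regularly varying (right) tail with exponent `α`:
`μ(x,∞) = x^{-α} L(x)` for all `x > 0`, where `L` is slowly varying
(and eventually positive) at infinity. -/
def HasRegVarTail (μ : Measure ℝ) (α : ℝ) : Prop :=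
  ∃ L : ℝ → ℝ, SlowlyVarying L ∧ (∀ᶠ x in atTop, 0 < L x) ∧
    ∀ x : ℝ, 0 < x → μ (Ioi x) = ENNReal.ofReal (x ^ (-α) * L x)

/-- The moment condition `∫₀^∞ (y^{α-δ} ∨ y^{α+δ}) ρ(dy) < ∞`. -/
def MomentCond (ρ : Measure ℝ) (α δ : ℝ) : Prop :=
  ∫⁻ y in Ioi (0:ℝ), ENNReal.ofReal (max (y ^ (α - δ)) (y ^ (α + δ))) ∂ρ < ⊤

/-- The nonvanishing condition `∫₀^∞ y^{α+iθ} ρ(dy) ≠ 0` for all `θ ∈ ℝ`. -/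
def MellinNonvanishing (ρ : Measure ℝ) (α : ℝ) : Prop :=
  ∀ θ : ℝ, (∫ y in Ioi (0:ℝ), (y : ℂ) ^ ((α : ℂ) + (θ : ℂ) * Complex.I) ∂ρ) ≠ 0

/-- `ρ` has the cancellation property with respect to `{ν_α}`: for every σ-finite
measure `ν` on `(0,∞)`, `ν ⊛ ρ = ν_α ⊛ ρ` implies `ν = ν_α`. -/
def HasCancellation (ρ : Measure ℝ) (α : ℝ) : Prop :=
  ∀ ν : Measure ℝ, SigmaFinite ν → ν (Iic 0) = 0 →
    mulConv ν ρ = mulConv (nuAlpha α) ρ → ν = nuAlpha α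

/-- Condition (2.18): `lim_{b↓0} limsup_{x→∞} (∫₀^b ρ(x/y,∞) ν(dy)) / ((ν⊛ρ)(x,∞)) = 0`. -/
def Cond218 (ν ρ : Measure ℝ) : Prop :=
  Tendsto (fun b : ℝ =>
      limsup (fun x : ℝ =>
        (∫⁻ y in Ioc (0:ℝ) b, ρ (Ioi (x / y)) ∂ν).toReal
          / ((mulConv ν ρ) (Ioi x)).toReal) atTop)
    (nhdsWithin 0 (Ioi 0)) (nhds 0)

/-- A law `ν` on `(0,∞)` (the law of a positive random variable `Y`) is
`α`-regular variation determining: for every random variable `Z` independent of `Y`,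
regular variation with exponent `α` of the product `X = Y Z` implies that `Z` is
regularly varying with exponent `α`. -/
def RVDetRV (α : ℝ) (ν : Measure ℝ) : Prop :=
  ∀ (Ω : Type) [MeasurableSpace Ω] (P : Measure Ω) [IsProbabilityMeasure P]
    (Y Z : Ω → ℝ), Measurable Y → Measurable Z → P.map Y = ν →
    IndepFun Y Z P →
    HasRegVarTail (P.map (fun ω => Y ω * Z ω)) α → HasRegVarTail (P.map Z) α

/-! ### Helly's selection theorem -/

/-- Bounded real sequences indexed by a countable type have a common subsequence along which
all of them converge. -/
lemma exists_subseq_tendsto_countable {ι : Type*} [Countable ι] (f : ℕ → ι → ℝ)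
    (hf : ∀ i, ∃ K : ℝ, ∀ᶠ n in atTop, f n i ∈ Icc 0 K) :
    ∃ φ : ℕ → ℕ, StrictMono φ ∧ ∀ i, ∃ l, Tendsto (fun n => f (φ n) i) atTop (𝓝 l) := by
  choose K hK using hf
  have hK0 : ∀ i, 0 ≤ K i := fun i => by
    obtain ⟨n, hn⟩ := (hK i).exists
    exact hn.1.trans hn.2
  -- truncating to `[0, K i]` changes finitely many terms of each sequence
  let F : ℕ → ι → ℝ := fun n i => max 0 (min (f n i) (K i))
  have hF : ∀ n, F n ∈ Set.pi univ (fun i => Icc 0 (K i)) := fun n i _ =>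
    ⟨le_max_left _ _, max_le (hK0 i) (min_le_right _ _)⟩
  obtain ⟨a, -, φ, hφ, hlim⟩ :=
    (isCompact_univ_pi (fun i => isCompact_Icc (a := (0:ℝ)) (b := K i))).tendsto_subseq hF
  refine ⟨φ, hφ, fun i => ⟨a i, ?_⟩⟩
  have h1 : Tendsto (fun n => F (φ n) i) atTop (𝓝 (a i)) := (tendsto_pi_nhds.1 hlim) i
  refine h1.congr' ?_
  filter_upwards [hφ.tendsto_atTop.eventually (hK i)] with n hn
  simp only [F]
  rw [min_eq_left hn.2, max_eq_right hn.1]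

/-- **Helly's selection theorem** for nonnegative antitone functions on the line, in the version
where each value is only eventually bounded. -/
lemma helly_antitone (f : ℕ → ℝ → ℝ) (hanti : ∀ n, Antitone (f n))
    (hf : ∀ u, ∃ K : ℝ, ∀ᶠ n in atTop, f n u ∈ Icc 0 K) :
    ∃ φ : ℕ → ℕ, StrictMono φ ∧ ∃ g : ℝ → ℝ, Antitone g ∧
      ∀ u, Tendsto (fun n => f (φ n) u) atTop (𝓝 (g u)) := by
  obtain ⟨φ, hφ, hl⟩ := exists_subseq_tendsto_countable (fun n (q : ℚ) => f n q) (fun q => hf q)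
  choose l hl using hl
  have hl0 : ∀ q, 0 ≤ l q := fun q => by
    obtain ⟨K, hK⟩ := hf q
    exact ge_of_tendsto (hl q) ((hφ.tendsto_atTop.eventually hK).mono fun n h => h.1)
  have hne : ∀ u : ℝ, Nonempty {q : ℚ // (q:ℝ) < u} := fun u =>
    let ⟨q, hq⟩ := exists_rat_lt u; ⟨⟨q, hq⟩⟩
  let g0 : ℝ → ℝ := fun u => ⨅ q : {q : ℚ // (q:ℝ) < u}, l q
  have hbdd : ∀ u : ℝ, BddBelow (range fun q : {q : ℚ // (q:ℝ) < u} => l q) := fun u =>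
    ⟨0, by rintro _ ⟨q, rfl⟩; exact hl0 _⟩
  have hg0 : Antitone g0 := by
    intro u v huv
    have := hne u
    refine le_ciInf fun q => ?_
    exact ciInf_le (hbdd v) ⟨q.1, q.2.trans_le huv⟩
  have hl_anti : Antitone l := fun q r hqr =>
    le_of_tendsto_of_tendsto' (hl r) (hl q) fun n => hanti _ (by exact_mod_cast hqr)
  have hlg : ∀ q : ℚ, l q ≤ g0 q := fun q => by
    have := hne q
    exact le_ciInf fun r => hl_anti (by exact_mod_cast r.2.le)
  have hgl : ∀ (q : ℚ) (u : ℝ), (q:ℝ) < u → g0 u ≤ l q := fun q u h =>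
    ciInf_le (hbdd u) ⟨q, h⟩
  have hcont : ∀ u, ContinuousAt g0 u → Tendsto (fun n => f (φ n) u) atTop (𝓝 (g0 u)) := by
    intro u hu
    rw [tendsto_order]
    constructor
    · intro a ha
      have h1 : ∀ᶠ v in 𝓝[>] u, a < g0 v := (hu.eventually (lt_mem_nhds ha)).filter_mono
        nhdsWithin_le_nhds
      obtain ⟨v, hv, huv⟩ := (h1.and self_mem_nhdsWithin).exists
      obtain ⟨q, hq1, hq2⟩ := exists_rat_btwn (show u < v from huv)
      have h2 : a < l q := hv.trans_le (hgl q v hq2)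
      filter_upwards [(hl q).eventually (lt_mem_nhds h2)] with n hn
      exact hn.trans_le (hanti _ hq1.le)
    · intro a ha
      have h1 : ∀ᶠ v in 𝓝[<] u, g0 v < a := (hu.eventually (gt_mem_nhds ha)).filter_mono
        nhdsWithin_le_nhds
      obtain ⟨v, hv, huv⟩ := (h1.and self_mem_nhdsWithin).exists
      obtain ⟨q, hq1, hq2⟩ := exists_rat_btwn (show v < u from huv)
      have h2 : l q < a := (hlg q).trans_lt ((hg0 hq1.le).trans_lt hv)
      filter_upwards [(hl q).eventually (gt_mem_nhds h2)] with n hn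
      exact (hanti _ hq2.le).trans_lt hn
  have hD : {u | ¬ ContinuousAt g0 u}.Countable := hg0.countable_not_continuousAt
  have : Countable {u | ¬ ContinuousAt g0 u} := hD.to_subtype
  obtain ⟨ψ, hψ, hm⟩ := exists_subseq_tendsto_countable
    (fun n (u : {u | ¬ ContinuousAt g0 u}) => f (φ n) u)
    (fun u => let ⟨K, hK⟩ := hf u; ⟨K, hφ.tendsto_atTop.eventually hK⟩)
  have hall : ∀ u, ∃ c, Tendsto (fun n => f (φ (ψ n)) u) atTop (𝓝 c) := by
    intro u
    by_cases hu : ContinuousAt g0 u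
    · exact ⟨g0 u, (hcont u hu).comp hψ.tendsto_atTop⟩
    · exact hm ⟨u, hu⟩
  choose g hg using hall
  exact ⟨φ ∘ ψ, hφ.comp hψ, g, fun u v huv =>
    le_of_tendsto_of_tendsto' (hg v) (hg u) fun n => hanti _ huv, hg⟩

/-! ### Division of Fourier transforms -/

/-- The Fourier transform of the finite measure `m`, in the normalisation of `𝓕`. -/
def measFourier (m : Measure ℝ) (ξ : ℝ) : ℂ :=
  ∫ w, Complex.exp (((-2 * Real.pi * ξ * w : ℝ) : ℂ) * Complex.I) ∂m

/-- If `h * m = 1` with `h` bounded and `m` a finite measure with smooth nonvanishing Fourier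
transform, then `h` convolved with the inverse Fourier transform of any test function `χ` is
constant. Indeed `χ / measFourier m` is again a test function, so its inverse transform `k` is a
Schwartz function with `k * m = 𝓕⁻¹ χ`, whence `h * 𝓕⁻¹ χ = (h * m) * k = ∫ k`. -/
lemma integral_mul_fourierInv_of_conv_eq_one (m : Measure ℝ) [IsFiniteMeasure m]
    (hsm : ContDiff ℝ ((⊤ : ℕ∞) : WithTop ℕ∞) (measFourier m)) (hnz : ∀ ξ, measFourier m ξ ≠ 0)
    (h : ℝ → ℝ) (hmeas : Measurable h) (B : ℝ) (hB : ∀ u, |h u| ≤ B)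
    (hconv : ∀ u, ∫ w, h (u - w) ∂m = 1)
    (χ : ℝ → ℂ) (hχ : ContDiff ℝ ((⊤ : ℕ∞) : WithTop ℕ∞) χ) (hχc : HasCompactSupport χ) (u : ℝ) :
    ∫ v, (h (u - v) : ℂ) * FourierTransform.fourierInv χ v = χ 0 / measFourier m 0 := by
  have hκ : ContDiff ℝ ((⊤ : ℕ∞) : WithTop ℕ∞) (fun ξ => χ ξ / measFourier m ξ) := by
    simp only [div_eq_mul_inv]
    exact hχ.mul (hsm.inv hnz)
  have hκc : HasCompactSupport (fun ξ => χ ξ / measFourier m ξ) := by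
    simp only [div_eq_mul_inv]
    exact hχc.mul_right
  let κ : SchwartzMap ℝ ℂ := hκc.toSchwartzMap hκ
  have hκa : ∀ ξ, κ ξ = χ ξ / measFourier m ξ := fun ξ => rfl
  let k : SchwartzMap ℝ ℂ := FourierTransform.fourierInv κ
  have hk : ∀ v, k v = ∫ ξ, Complex.exp (((2 * Real.pi * ξ * v : ℝ) : ℂ) * Complex.I) * κ ξ := by
    intro v
    have : k v = FourierTransform.fourierInv (κ : ℝ → ℂ) v := by
      rw [← SchwartzMap.fourierInv_coe]
    rw [this, Real.fourierInv_eq']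
    simp only [RCLike.inner_apply, conj_trivial, smul_eq_mul]
    congr 1; ext ξ; ring_nf
  have hk0 : ∫ v, k v = χ 0 / measFourier m 0 := by
    have h1 : FourierTransform.fourier k = κ := FourierTransform.fourier_fourierInv_eq κ
    have h2 : FourierTransform.fourier (k : ℝ → ℂ) 0 = κ 0 := by
      rw [← SchwartzMap.fourier_coe, h1]
    rw [Real.fourier_eq'] at h2
    simpa [hκa] using h2
  -- the convolution of `k` with `m` is the inverse Fourier transform of `χ`
  have hφ : ∀ v, FourierTransform.fourierInv χ v = ∫ w, k (v - w) ∂m := by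
    intro v
    have hint : Integrable (Function.uncurry fun (ξ w : ℝ) =>
        Complex.exp (((2 * Real.pi * ξ * (v - w) : ℝ) : ℂ) * Complex.I) * κ ξ)
        ((volume : Measure ℝ).prod m) := by
      have h1 : Integrable (fun p : ℝ × ℝ => κ p.1) ((volume : Measure ℝ).prod m) :=
        κ.integrable.comp_fst m
      refine h1.bdd_mul (c := 1) (f := fun p : ℝ × ℝ =>
        Complex.exp (((2 * Real.pi * p.1 * (v - p.2) : ℝ) : ℂ) * Complex.I))
        (Continuous.aestronglyMeasurable (by fun_prop)) (Eventually.of_forall fun p => ?_)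
      rw [Complex.norm_exp_ofReal_mul_I]
    simp only [hk]
    rw [← integral_integral_swap hint, Real.fourierInv_eq']
    congr 1; ext ξ
    rw [integral_mul_const, hκa]
    have : ∀ w : ℝ, Complex.exp (((2 * Real.pi * ξ * (v - w) : ℝ) : ℂ) * Complex.I) =
        Complex.exp (((2 * Real.pi * ξ * v : ℝ) : ℂ) * Complex.I) *
          Complex.exp (((-2 * Real.pi * ξ * w : ℝ) : ℂ) * Complex.I) := by
      intro w
      rw [← Complex.exp_add]
      congr 1; push_cast; ring
    simp only [this]
    rw [integral_const_mul]
    change _ = _ * measFourier m ξ * _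
    simp only [RCLike.inner_apply, conj_trivial, smul_eq_mul]
    field_simp [hnz ξ]
  have hB' : ∀ x, ‖(h x : ℂ)‖ ≤ B := fun x => by simpa using hB x
  have hkint : Integrable k volume := k.integrable
  have hint2 : Integrable (Function.uncurry fun (v w : ℝ) => (h (u - v) : ℂ) * k (v - w))
      ((volume : Measure ℝ).prod m) := by
    have h0 : Integrable (fun p : ℝ × ℝ => k p.1) ((volume : Measure ℝ).prod m) :=
      hkint.comp_fst m
    have h1 : Integrable (fun p : ℝ × ℝ => k (p.1 - p.2)) ((volume : Measure ℝ).prod m) :=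
      ((measurePreserving_sub_prod (volume : Measure ℝ) m).integrable_comp
        (h0.aestronglyMeasurable)).2 h0
    refine h1.bdd_mul (c := B) (f := fun p : ℝ × ℝ => (h (u - p.1) : ℂ))
      (Measurable.aestronglyMeasurable (by fun_prop)) (Eventually.of_forall fun p => hB' _)
  have hint3 : Integrable (Function.uncurry fun (v w : ℝ) => (h (u - v - w) : ℂ) * k v)
      ((volume : Measure ℝ).prod m) := by
    have h0 : Integrable (fun p : ℝ × ℝ => k p.1) ((volume : Measure ℝ).prod m) :=
      hkint.comp_fst m
    refine h0.bdd_mul (c := B) (f := fun p : ℝ × ℝ => (h (u - p.1 - p.2) : ℂ))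
      (Measurable.aestronglyMeasurable (by fun_prop)) (Eventually.of_forall fun p => hB' _)
  calc ∫ v, (h (u - v) : ℂ) * FourierTransform.fourierInv χ v
      = ∫ v, ∫ w, (h (u - v) : ℂ) * k (v - w) ∂m := by
        congr 1; ext v; rw [hφ, integral_const_mul]
    _ = ∫ w, (∫ v, (h (u - v) : ℂ) * k (v - w)) ∂m := integral_integral_swap hint2
    _ = ∫ w, (∫ v, (h (u - v - w) : ℂ) * k v) ∂m := by
        congr 1; ext w
        rw [← integral_add_right_eq_self (μ := volume) (fun v => (h (u - v) : ℂ) * k (v - w)) w]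
        congr 1; ext v
        rw [add_sub_cancel_right, sub_sub]
    _ = ∫ v, ∫ w, (h (u - v - w) : ℂ) * k v ∂m := (integral_integral_swap hint3).symm
    _ = ∫ v, k v := by
        congr 1; ext v
        rw [integral_mul_const, integral_complex_ofReal, hconv]; simp
    _ = _ := hk0

/-- A bounded solution `h` of `h * m = 1` equals the constant `1 / m(ℝ)` at each of its continuity
points: by `integral_mul_fourierInv_of_conv_eq_one` its convolutions with an approximate identity
made of functions with compactly supported Fourier transform all take that value. -/
lemma eq_of_conv_eq_one (m : Measure ℝ) [IsFiniteMeasure m]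
    (hsm : ContDiff ℝ ((⊤ : ℕ∞) : WithTop ℕ∞) (measFourier m)) (hnz : ∀ ξ, measFourier m ξ ≠ 0)
    (h : ℝ → ℝ) (hmeas : Measurable h) (B : ℝ) (hB : ∀ u, |h u| ≤ B)
    (hconv : ∀ u, ∫ w, h (u - w) ∂m = 1) (u : ℝ) (hu : ContinuousAt h u) :
    (h u : ℂ) = 1 / measFourier m 0 := by
  let b : ContDiffBump (0 : ℝ) := ⟨1, 2, by norm_num, by norm_num⟩
  let χ : ℝ → ℂ := fun ξ => ((b ξ : ℝ) : ℂ)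
  have hχ : ContDiff ℝ ((⊤ : ℕ∞) : WithTop ℕ∞) χ := Complex.ofRealCLM.contDiff.comp b.contDiff
  have hχc : HasCompactSupport χ := b.hasCompactSupport.comp_left Complex.ofReal_zero
  have hχ0 : χ 0 = 1 := by
    simp only [χ]
    rw [b.one_of_mem_closedBall (by simp [b])]; simp
  let X : SchwartzMap ℝ ℂ := hχc.toSchwartzMap hχ
  let φ : SchwartzMap ℝ ℂ := FourierTransform.fourierInv X
  have hφX : ∀ v, φ v = FourierTransform.fourierInv χ v := fun v => by
    have : φ v = FourierTransform.fourierInv (X : ℝ → ℂ) v := by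
      rw [← SchwartzMap.fourierInv_coe]
    exact this
  have hφint : ∫ v, φ v = 1 := by
    have h1 : FourierTransform.fourier φ = X := FourierTransform.fourier_fourierInv_eq X
    have h2 : FourierTransform.fourier (φ : ℝ → ℂ) 0 = X 0 := by
      rw [← SchwartzMap.fourier_coe, h1]
    rw [Real.fourier_eq'] at h2
    have h3 : X 0 = 1 := hχ0
    rw [h3] at h2
    simpa using h2
  -- the approximate identity `v ↦ r * φ (r * v)`, with `r = n + 1`, has transform `χ (r⁻¹ * ξ)`
  have hscale : ∀ n : ℕ, ∫ v, (h (u - v / ((n:ℝ) + 1)) : ℂ) * φ v = 1 / measFourier m 0 := by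
    intro n
    have hn : (0:ℝ) < (n:ℝ) + 1 := by positivity
    set r : ℝ := (n:ℝ) + 1 with hr
    have hχ' : ContDiff ℝ ((⊤ : ℕ∞) : WithTop ℕ∞) (fun ξ => χ (r⁻¹ * ξ)) :=
      hχ.comp (contDiff_const.mul contDiff_id)
    have hχc' : HasCompactSupport (fun ξ => χ (r⁻¹ * ξ)) :=
      hχc.comp_homeomorph (Homeomorph.mulLeft₀ r⁻¹ (inv_ne_zero hn.ne'))
    have key := integral_mul_fourierInv_of_conv_eq_one m hsm hnz h hmeas B hB hconv _ hχ' hχc' u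
    rw [mul_zero, hχ0] at key
    rw [← key]
    have hF : ∀ v, FourierTransform.fourierInv (fun ξ => χ (r⁻¹ * ξ)) v = (r : ℂ) * φ (v * r) := by
      intro v
      rw [hφX, Real.fourierInv_eq', Real.fourierInv_eq']
      have := Measure.integral_comp_mul_left (fun ξ =>
        Complex.exp (((2 * Real.pi * inner ℝ ξ (v * r) : ℝ) : ℂ) * Complex.I) • χ ξ) r⁻¹
      rw [inv_inv, abs_of_pos hn] at this
      rw [Complex.real_smul] at this
      rw [← this]
      congr 1; ext ξ
      simp only [RCLike.inner_apply, conj_trivial]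
      congr 5
      field_simp
    have := Measure.integral_comp_mul_right (fun v => (h (u - v / r) : ℂ) * φ v) r
    rw [abs_of_pos (inv_pos.2 hn), Complex.real_smul] at this
    have h4 : ∀ v, (h (u - v) : ℂ) * FourierTransform.fourierInv (fun ξ => χ (r⁻¹ * ξ)) v =
        (r : ℂ) * ((h (u - v * r / r) : ℂ) * φ (v * r)) := by
      intro v
      rw [hF, mul_div_assoc, div_self hn.ne', mul_one]; ring
    simp only [h4]
    rw [integral_const_mul, this, ← mul_assoc, Complex.ofReal_inv, mul_inv_cancel₀, one_mul]
    exact_mod_cast hn.ne'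
  have hlim : Tendsto (fun n : ℕ => ∫ v, (h (u - v / ((n:ℝ) + 1)) : ℂ) * φ v) atTop
      (𝓝 (∫ v, (h u : ℂ) * φ v)) := by
    refine tendsto_integral_of_dominated_convergence (fun v => B * ‖φ v‖) (fun n => ?_)
      (φ.integrable.norm.const_mul B) (fun n => ?_) ?_
    · have h1 : AEStronglyMeasurable (fun v => (h (u - v / ((n:ℝ) + 1)) : ℂ)) volume :=
        Measurable.aestronglyMeasurable (by fun_prop)
      exact h1.mul φ.integrable.aestronglyMeasurable
    · refine Eventually.of_forall fun v => ?_
      rw [norm_mul, Complex.norm_real, Real.norm_eq_abs]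
      gcongr
      exact hB _
    · refine Eventually.of_forall fun v => ?_
      refine Tendsto.mul_const _ ((Complex.continuous_ofReal.tendsto _).comp ?_)
      have h1 : Tendsto (fun n : ℕ => u - v / ((n:ℝ) + 1)) atTop (𝓝 u) := by
        have h2 : Tendsto (fun n : ℕ => v / ((n:ℝ) + 1)) atTop (𝓝 0) :=
          tendsto_const_nhds.div_atTop
            (tendsto_atTop_add_const_right _ _ tendsto_natCast_atTop_atTop)
        simpa using tendsto_const_nhds.sub h2
      exact hu.tendsto.comp h1
  simp only [hscale] at hlim
  rw [integral_const_mul, hφint, mul_one] at hlim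
  exact tendsto_nhds_unique hlim tendsto_const_nhds

/-! ### Regular variation and tails of products -/

/-- Regular variation of the tail in terms of ratios, without the slowly varying factor. -/
lemma hasRegVarTail_iff (μ : Measure ℝ) [IsFiniteMeasure μ] (α : ℝ) :
    HasRegVarTail μ α ↔ (∀ᶠ x in atTop, 0 < μ.real (Ioi x)) ∧
      ∀ c : ℝ, 0 < c →
        Tendsto (fun x => μ.real (Ioi (c * x)) / μ.real (Ioi x)) atTop (𝓝 (c ^ (-α))) := by
  constructor
  · rintro ⟨L, hL, hpos, hμ⟩
    have hreal : ∀ x, 0 < x → 0 < L x → μ.real (Ioi x) = x ^ (-α) * L x := by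
      intro x hx hLx
      rw [measureReal_def, hμ x hx, ENNReal.toReal_ofReal (by positivity)]
    refine ⟨?_, fun c hc => ?_⟩
    · filter_upwards [hpos, eventually_gt_atTop 0] with x hx hx0
      rw [hreal x hx0 hx]; positivity
    · have h1 : Tendsto (fun x => c ^ (-α) * (L (c * x) / L x)) atTop (𝓝 (c ^ (-α) * 1)) :=
        (hL c hc).const_mul _
      rw [mul_one] at h1
      refine h1.congr' ?_
      have hcx : ∀ᶠ x in atTop, 0 < L (c * x) :=
        (tendsto_id.const_mul_atTop hc).eventually hpos
      filter_upwards [hpos, hcx, eventually_gt_atTop 0] with x hx hcx hx0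
      rw [hreal x hx0 hx, hreal (c * x) (by positivity) hcx, Real.mul_rpow hc.le hx0.le]
      have : (0:ℝ) < x ^ (-α) := by positivity
      field_simp
  · rintro ⟨hpos, hlim⟩
    refine ⟨fun x => x ^ α * μ.real (Ioi x), fun c hc => ?_, ?_, fun x hx => ?_⟩
    · have h1 : Tendsto (fun x => c ^ α * (μ.real (Ioi (c * x)) / μ.real (Ioi x))) atTop
          (𝓝 (c ^ α * c ^ (-α))) := (hlim c hc).const_mul _
      rw [← Real.rpow_add hc, add_neg_cancel, Real.rpow_zero] at h1
      refine h1.congr' ?_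
      filter_upwards [hpos, eventually_gt_atTop 0] with x hx hx0
      rw [Real.mul_rpow hc.le hx0.le]
      have : (0:ℝ) < x ^ α := by positivity
      field_simp
    · filter_upwards [hpos, eventually_gt_atTop 0] with x hx hx0
      positivity
    · rw [← mul_assoc, ← Real.rpow_add hx, neg_add_cancel, Real.rpow_zero, one_mul,
        ofReal_measureReal]

/-- The tail of a product `Y Z` is the mixture, over the law of `Y`, of rescaled tails of `Z`. -/
lemma tail_mul_eq_integral {Ω : Type} [MeasurableSpace Ω] (P : Measure Ω) [IsProbabilityMeasure P]
    (Y Z : Ω → ℝ) (hY : Measurable Y) (hZ : Measurable Z) (hYpos : P.map Y (Iic 0) = 0)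
    (hind : IndepFun Y Z P) (x : ℝ) :
    (P.map (fun ω => Y ω * Z ω)).real (Ioi x) =
      ∫ y, (P.map Z).real (Ioi (x / y)) ∂(P.map Y) := by
  have : IsProbabilityMeasure (P.map Y) := Measure.isProbabilityMeasure_map hY.aemeasurable
  have : IsProbabilityMeasure (P.map Z) := Measure.isProbabilityMeasure_map hZ.aemeasurable
  have hmul : Measurable fun p : ℝ × ℝ => p.1 * p.2 := measurable_fst.mul measurable_snd
  have h1 : P.map (fun ω => Y ω * Z ω) =
      ((P.map Y).prod (P.map Z)).map (fun p : ℝ × ℝ => p.1 * p.2) := by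
    rw [← hind.map_prod_eq_prod_map_map hY.aemeasurable hZ.aemeasurable,
      Measure.map_map hmul (hY.prodMk hZ)]
    rfl
  have hanti : Antitone fun t => (P.map Z).real (Ioi t) := fun a b hab =>
    measureReal_mono (Ioi_subset_Ioi hab)
  have hm : Measurable fun y => (P.map Z).real (Ioi (x / y)) :=
    hanti.measurable.comp (measurable_const.div measurable_id)
  rw [h1, measureReal_def, Measure.map_apply hmul measurableSet_Ioi,
    Measure.prod_apply (hmul measurableSet_Ioi),
    integral_eq_lintegral_of_nonneg_ae (Eventually.of_forall fun _ => measureReal_nonneg)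
      hm.aestronglyMeasurable]
  congr 1
  refine lintegral_congr_ae ?_
  have hpos : ∀ᵐ y ∂(P.map Y), 0 < y := by
    rw [ae_iff]; simpa [Set.Iic_def] using hYpos
  filter_upwards [hpos] with y hy
  rw [ofReal_measureReal]
  congr 1
  ext z
  simp [div_lt_iff₀ hy, mul_comm]

/-- A one-sided Potter bound: an antitone function bounded by `1` which is regularly varying with
exponent `α` along the ratio `2` satisfies `S (w / y) ≤ C * y ^ β * S w` for large `w` and every
`y ≥ 1`, whenever `β > α`. There is no lower restriction on `w / y`, because `S` is bounded. -/
lemma potter_bound (S : ℝ → ℝ) (hS : Antitone S) (hS1 : ∀ x, S x ≤ 1) (α β : ℝ) (hαβ : α < β)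
    (hβ : 0 < β) (hpos : ∀ᶠ x in atTop, 0 < S x)
    (hlim : Tendsto (fun x => S (2 * x) / S x) atTop (𝓝 ((2:ℝ) ^ (-α)))) :
    ∃ C x0 : ℝ, 0 < C ∧ 0 < x0 ∧ ∀ w, x0 ≤ w → ∀ y, 1 ≤ y → S (w / y) ≤ C * y ^ β * S w := by
  have h2 : (2:ℝ) ^ (-β) < (2:ℝ) ^ (-α) :=
    Real.rpow_lt_rpow_of_exponent_lt (by norm_num) (by linarith)
  have hev : ∀ᶠ x in atTop, 0 < S x ∧ S x ≤ (2:ℝ) ^ β * S (2 * x) := by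
    filter_upwards [hpos, hlim.eventually (lt_mem_nhds h2)] with x hx h
    refine ⟨hx, ?_⟩
    rw [lt_div_iff₀ hx, Real.rpow_neg (by norm_num), inv_mul_lt_iff₀ (by positivity)] at h
    exact h.le
  obtain ⟨x1, hx1⟩ := eventually_atTop.1 hev
  set x0 := max x1 1 with hx0
  have hx0pos : 0 < x0 := lt_of_lt_of_le one_pos (le_max_right _ _)
  have hstep : ∀ x, x0 ≤ x → 0 < S x ∧ S x ≤ (2:ℝ) ^ β * S (2 * x) := fun x hx =>
    hx1 x ((le_max_left _ _).trans hx)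
  have hiter : ∀ k : ℕ, ∀ x, x0 ≤ x → S x ≤ ((2:ℝ) ^ β) ^ k * S (2 ^ k * x) := by
    intro k
    induction k with
    | zero => intro x _; simp
    | succ k ih =>
      intro x hx
      have hxk : x0 ≤ 2 ^ k * x := by
        have : (1:ℝ) ≤ 2 ^ k := one_le_pow₀ (by norm_num)
        nlinarith
      calc S x ≤ ((2:ℝ) ^ β) ^ k * S (2 ^ k * x) := ih x hx
        _ ≤ ((2:ℝ) ^ β) ^ k * ((2:ℝ) ^ β * S (2 * (2 ^ k * x))) := by
          gcongr; exact (hstep _ hxk).2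
        _ = _ := by rw [pow_succ ((2:ℝ) ^ β), ← mul_assoc 2, ← pow_succ' (2:ℝ), mul_assoc]
  have hSx0 : 0 < S x0 := (hstep x0 le_rfl).1
  refine ⟨(2:ℝ) ^ β / S x0, x0, by positivity, hx0pos, fun w hw y hy => ?_⟩
  have hy0 : 0 < y := by linarith
  obtain ⟨n, hn1, hn2⟩ := exists_nat_pow_near hy (show (1:ℝ) < 2 by norm_num)
  have hSw : 0 < S w := (hstep w hw).1
  have hpow : ((2:ℝ) ^ β) ^ (n + 1) ≤ (2:ℝ) ^ β * y ^ β := by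
    rw [← Real.rpow_natCast, ← Real.rpow_mul (by norm_num), mul_comm β,
      Real.rpow_mul (by norm_num), Real.rpow_natCast, ← Real.mul_rpow (by norm_num) hy0.le]
    refine Real.rpow_le_rpow (by positivity) ?_ hβ.le
    rw [pow_succ]; linarith
  have hyβ : 0 < y ^ β := by positivity
  rcases le_total x0 (w / y) with h | h
  · have h1 : S (2 ^ (n + 1) * (w / y)) ≤ S w := hS (by
      rw [mul_div_assoc', le_div_iff₀ hy0]
      nlinarith)
    calc S (w / y) ≤ ((2:ℝ) ^ β) ^ (n + 1) * S (2 ^ (n + 1) * (w / y)) := hiter _ _ h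
      _ ≤ ((2:ℝ) ^ β) ^ (n + 1) * S w := by gcongr
      _ ≤ ((2:ℝ) ^ β * y ^ β) * S w := by gcongr
      _ ≤ ((2:ℝ) ^ β * y ^ β) * S w / S x0 := le_div_self (by positivity) hSx0 (hS1 _)
      _ = _ := by ring
  · have h1 : S (2 ^ (n + 1) * x0) ≤ S w := hS (by
      rw [div_le_iff₀ hy0] at h
      nlinarith)
    calc S (w / y) ≤ S x0 / S x0 := by rw [div_self hSx0.ne']; exact hS1 _
      _ ≤ (((2:ℝ) ^ β) ^ (n + 1) * S (2 ^ (n + 1) * x0)) / S x0 := by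
        gcongr; exact hiter _ _ le_rfl
      _ ≤ (((2:ℝ) ^ β) ^ (n + 1) * S w) / S x0 := by gcongr
      _ ≤ (((2:ℝ) ^ β * y ^ β) * S w) / S x0 := by gcongr
      _ = _ := by ring

/-! ### The Mellin transform as a Fourier transform -/

lemma integrable_rpow_of_le (ν : Measure ℝ) [IsProbabilityMeasure ν] (hpos : ∀ᵐ y ∂ν, 0 < y)
    {β : ℝ} (hI : Integrable (fun y => y ^ β) ν) {γ : ℝ} (h0 : 0 ≤ γ) (hγ : γ ≤ β) :
    Integrable (fun y : ℝ => y ^ γ) ν := by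
  refine ((integrable_const (1:ℝ)).add hI).mono' (by fun_prop) ?_
  filter_upwards [hpos] with y hy
  rw [Real.norm_of_nonneg (by positivity)]
  simp only [Pi.add_apply]
  have : 0 < y ^ β := by positivity
  rcases le_total y 1 with h | h
  · linarith [Real.rpow_le_one hy.le h h0]
  · linarith [Real.rpow_le_rpow_of_exponent_le h hγ]

lemma mem_interior_integrableExpSet (ν : Measure ℝ) [IsProbabilityMeasure ν]
    (hpos : ∀ᵐ y ∂ν, 0 < y) {α β : ℝ} (hα : 0 < α) (hαβ : α < β)
    (hI : Integrable (fun y => y ^ β) ν) : α ∈ interior (integrableExpSet Real.log ν) := by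
  refine mem_interior.2 ⟨Ioo 0 β, fun t ht => ?_, isOpen_Ioo, hα, hαβ⟩
  refine (integrable_rpow_of_le ν hpos hI ht.1.le ht.2.le).congr ?_
  filter_upwards [hpos] with y hy
  rw [Real.rpow_def_of_pos hy, mul_comm]

/-- The image under `log` of the measure `y ^ α ν(dy)`; its Fourier transform is the Mellin
transform of `ν` on the line of real part `α`. -/
def logTilt (α : ℝ) (ν : Measure ℝ) : Measure ℝ :=
  (ν.withDensity fun y => ENNReal.ofReal (y ^ α)).map Real.log

lemma integral_logTilt {E : Type*} [NormedAddCommGroup E] [NormedSpace ℝ E]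
    (α : ℝ) (ν : Measure ℝ) (hpos : ∀ᵐ y ∂ν, 0 < y) (F : ℝ → E) (hF : StronglyMeasurable F) :
    ∫ w, F w ∂(logTilt α ν) = ∫ y, y ^ α • F (Real.log y) ∂ν := by
  rw [logTilt, integral_map Real.measurable_log.aemeasurable hF.aestronglyMeasurable,
    integral_withDensity_eq_integral_toReal_smul (by fun_prop)
      (Eventually.of_forall fun _ => ENNReal.ofReal_lt_top)]
  refine integral_congr_ae ?_
  filter_upwards [hpos] with y hy
  rw [ENNReal.toReal_ofReal (by positivity)]

lemma isFiniteMeasure_logTilt (α : ℝ) (ν : Measure ℝ)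
    (hI : Integrable (fun y => y ^ α) ν) : IsFiniteMeasure (logTilt α ν) := by
  have : IsFiniteMeasure (ν.withDensity fun y => ENNReal.ofReal (y ^ α)) :=
    isFiniteMeasure_withDensity_ofReal hI.2
  exact Measure.isFiniteMeasure_map _ _

lemma mellin_eq_complexMGF (ν : Measure ℝ) (hpos : ∀ᵐ y ∂ν, 0 < y) (z : ℂ) :
    ∫ y in Ioi (0:ℝ), (y : ℂ) ^ z ∂ν = complexMGF Real.log ν z := by
  rw [Measure.restrict_eq_self_of_ae_mem (s := Ioi (0:ℝ)) hpos, complexMGF]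
  refine integral_congr_ae ?_
  filter_upwards [hpos] with y hy
  rw [Complex.cpow_def_of_ne_zero (by exact_mod_cast hy.ne'), Complex.ofReal_log hy.le, mul_comm]

lemma measFourier_logTilt (α : ℝ) (ν : Measure ℝ) (hpos : ∀ᵐ y ∂ν, 0 < y) (ξ : ℝ) :
    measFourier (logTilt α ν) ξ =
      complexMGF Real.log ν ((α : ℂ) + ((-2 * Real.pi * ξ : ℝ) : ℂ) * Complex.I) := by
  have hc : Continuous fun w : ℝ =>
      Complex.exp (((-2 * Real.pi * ξ * w : ℝ) : ℂ) * Complex.I) := by fun_prop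
  rw [measFourier, integral_logTilt α ν hpos _ hc.stronglyMeasurable, complexMGF]
  refine integral_congr_ae ?_
  filter_upwards [hpos] with y hy
  rw [Complex.real_smul, Real.rpow_def_of_pos hy, Complex.ofReal_exp, ← Complex.exp_add]
  congr 1
  push_cast; ring

/-- The transform is smooth because the Mellin transform is analytic on a strip around the line of
real part `α`: the moments of orders between `0` and `β` are all finite. -/
lemma contDiff_measFourier_logTilt (ν : Measure ℝ) [IsProbabilityMeasure ν]
    (hpos : ∀ᵐ y ∂ν, 0 < y) {α β : ℝ} (hα : 0 < α) (hαβ : α < β)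
    (hI : Integrable (fun y => y ^ β) ν) :
    ContDiff ℝ ((⊤ : ℕ∞) : WithTop ℕ∞) (measFourier (logTilt α ν)) := by
  rw [show measFourier (logTilt α ν) = _ from funext (measFourier_logTilt α ν hpos)]
  rw [contDiff_iff_contDiffAt]
  intro ξ
  have h1 : AnalyticAt ℂ (complexMGF Real.log ν)
      ((α : ℂ) + ((-2 * Real.pi * ξ : ℝ) : ℂ) * Complex.I) := by
    apply analyticAt_complexMGF
    simpa using mem_interior_integrableExpSet ν hpos hα hαβ hI
  have h2 : ContDiffAt ℝ ((⊤ : ℕ∞) : WithTop ℕ∞) (fun ξ : ℝ =>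
      (α : ℂ) + ((-2 * Real.pi * ξ : ℝ) : ℂ) * Complex.I) ξ := by
    have : ContDiff ℝ ((⊤ : ℕ∞) : WithTop ℕ∞) (fun ξ : ℝ => ((-2 * Real.pi * ξ : ℝ) : ℂ)) :=
      Complex.ofRealCLM.contDiff.comp (contDiff_const.mul contDiff_id)
    exact (contDiff_const.add (this.mul contDiff_const)).contDiffAt
  exact ContDiffAt.comp (g := complexMGF Real.log ν) (f := fun ξ : ℝ =>
      (α : ℂ) + ((-2 * Real.pi * ξ : ℝ) : ℂ) * Complex.I) ξ
    (h1.contDiffAt.restrict_scalars ℝ) h2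

lemma measFourier_logTilt_zero (α : ℝ) (ν : Measure ℝ) (hpos : ∀ᵐ y ∂ν, 0 < y) :
    measFourier (logTilt α ν) 0 = ((∫ y, y ^ α ∂ν : ℝ) : ℂ) := by
  rw [measFourier, integral_logTilt α ν hpos _ (by simpa using stronglyMeasurable_const),
    ← integral_complex_ofReal]
  simp

/-! ### Sufficiency of nonvanishing -/

/-- The tail `T` of `Z` is dominated by the tail `S` of `Y Z`, up to rescaling: if `Y > y0` with
positive probability, then `Y Z > y0 w` on the intersection of that event with `Z > w`. -/
lemma exists_tail_le (ν : Measure ℝ) [IsProbabilityMeasure ν] (hpos : ∀ᵐ y ∂ν, 0 < y)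
    (T S : ℝ → ℝ) (hT : Antitone T) (hT0 : ∀ x, 0 ≤ T x) (hT1 : ∀ x, T x ≤ 1)
    (hST : ∀ x, S x = ∫ y, T (x / y) ∂ν) :
    ∃ y0 D : ℝ, 0 < y0 ∧ 0 < D ∧ ∀ w, 0 < w → T w ≤ D * S (y0 * w) := by
  have h1 : ∃ n : ℕ, ν (Ioi (1 / ((n:ℝ) + 1))) ≠ 0 := by
    by_contra! hcon
    have h2 : ∀ᵐ y ∂ν, ∀ n : ℕ, y ≤ 1 / ((n:ℝ) + 1) := by
      rw [ae_all_iff]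
      intro n
      rw [ae_iff]
      simpa [Set.Ioi_def] using hcon n
    obtain ⟨y, hy, hyn⟩ := (hpos.and h2).exists
    obtain ⟨n, hn⟩ := exists_nat_one_div_lt hy
    exact absurd (hyn n) (not_le.2 hn)
  obtain ⟨n, hn⟩ := h1
  have hy0 : (0:ℝ) < 1 / ((n:ℝ) + 1) := by positivity
  set y0 : ℝ := 1 / ((n:ℝ) + 1)
  have hp : 0 < ν.real (Ioi y0) := ENNReal.toReal_pos hn (measure_ne_top _ _)
  refine ⟨y0, (ν.real (Ioi y0))⁻¹, hy0, by positivity, fun w hw => ?_⟩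
  rw [le_inv_mul_iff₀ hp]
  have hm : Measurable fun y => T (y0 * w / y) :=
    hT.measurable.comp (measurable_const.div measurable_id)
  have hint : Integrable (fun y => T (y0 * w / y)) ν :=
    (integrable_const (1:ℝ)).mono' hm.aestronglyMeasurable (Eventually.of_forall fun y => by
      rw [Real.norm_of_nonneg (hT0 _)]; exact hT1 _)
  calc ν.real (Ioi y0) * T w = ∫ y in Ioi y0, T w ∂ν := by simp
    _ ≤ ∫ y in Ioi y0, T (y0 * w / y) ∂ν := by
      refine setIntegral_mono_on (by simp) hint.integrableOn measurableSet_Ioi ?_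
      intro y hy
      refine hT ?_
      have hyy : y0 < y := hy
      rw [div_le_iff₀ (hy0.trans hyy)]
      nlinarith
    _ ≤ ∫ y, T (y0 * w / y) ∂ν :=
      setIntegral_le_integral hint (Eventually.of_forall fun y => hT0 _)
    _ = S (y0 * w) := (hST _).symm

/-- Along a suitable subsequence of any sequence tending to infinity, the ratio of the tail `T` of
`Z` to the regularly varying tail `S` of `Y Z` tends to `1 / E[Y ^ α]`. A Helly limit `g` of
`T (s * exp u) / S s` satisfies `∫ g (u - log y) ν(dy) = exp (-α u)`, so `exp (α u) g(u)` is a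
bounded solution of the convolution equation for `logTilt α ν`. -/
lemma exists_subseq_tendsto_ratio (ν : Measure ℝ) [IsProbabilityMeasure ν]
    (hpos : ∀ᵐ y ∂ν, 0 < y) {α β : ℝ} (hα : 0 < α) (hαβ : α < β)
    (hI : Integrable (fun y => y ^ β) ν) (hnz : ∀ ξ, measFourier (logTilt α ν) ξ ≠ 0)
    (T S : ℝ → ℝ) (hT : Antitone T) (hT0 : ∀ x, 0 ≤ T x) (hT1 : ∀ x, T x ≤ 1)
    (hS : Antitone S) (hS1 : ∀ x, S x ≤ 1) (hST : ∀ x, S x = ∫ y, T (x / y) ∂ν)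
    (hSpos : ∀ᶠ x in atTop, 0 < S x)
    (hSlim : ∀ c : ℝ, 0 < c → Tendsto (fun x => S (c * x) / S x) atTop (𝓝 (c ^ (-α))))
    (s : ℕ → ℝ) (hs : Tendsto s atTop atTop) :
    ∃ φ : ℕ → ℕ, Tendsto (fun n => T (s (φ n)) / S (s (φ n))) atTop
      (𝓝 (1 / ∫ y, y ^ α ∂ν)) := by
  have hβ : 0 < β := hα.trans hαβ
  have hS0 : ∀ x, 0 ≤ S x := fun x => by rw [hST]; exact integral_nonneg fun y => hT0 _
  obtain ⟨y0, D, hy0, hD, hTS⟩ := exists_tail_le ν hpos T S hT hT0 hT1 hST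
  obtain ⟨C, x0, hC, hx0, hpot⟩ := potter_bound S hS hS1 α β hαβ hβ hSpos (hSlim 2 (by norm_num))
  -- `S (y0 * (s * e ^ u)) / S s` stays bounded for each `u`
  have hSu : ∀ u, Tendsto (fun x => S (y0 * (x * Real.exp u)) / S x) atTop
      (𝓝 ((y0 * Real.exp u) ^ (-α))) := fun u => by
    refine (hSlim (y0 * Real.exp u) (by positivity)).congr fun x => ?_
    congr 2; ring
  have hdom : ∀ u, ∃ K : ℝ, 0 ≤ K ∧ ∀ᶠ x in atTop,
      ∀ y, 0 < y → T (x * Real.exp u / y) / S x ≤ K * (1 + y ^ β) := by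
    intro u
    set r : ℝ := (y0 * Real.exp u) ^ (-α) + 1 with hr
    have hr0 : 0 < r := by positivity
    refine ⟨D * (1 + C) * r, by positivity, ?_⟩
    have hw : ∀ᶠ x in atTop, x0 ≤ y0 * (x * Real.exp u) :=
      (((tendsto_id.atTop_mul_const (Real.exp_pos u)).const_mul_atTop hy0)).eventually
        (eventually_ge_atTop x0)
    filter_upwards [hSpos, hw, (hSu u).eventually (gt_mem_nhds (lt_add_one _)),
      eventually_gt_atTop 0] with x hSx hwx hrx hx y hy
    have hyβ : 0 < y ^ β := by positivity
    have hSw : S (y0 * (x * Real.exp u)) ≤ r * S x := by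
      rw [div_lt_iff₀ hSx] at hrx; exact hrx.le
    have hxe : 0 < x * Real.exp u := by positivity
    rw [div_le_iff₀ hSx]
    rcases le_total y 1 with h | h
    · have h1 : T (x * Real.exp u / y) ≤ T (x * Real.exp u) := hT (by
        rw [le_div_iff₀ hy]; nlinarith)
      calc T (x * Real.exp u / y) ≤ D * S (y0 * (x * Real.exp u)) := h1.trans (hTS _ hxe)
        _ ≤ D * (r * S x) := by gcongr
        _ = (D * r * S x) * (1 * 1) := by ring
        _ ≤ (D * r * S x) * ((1 + C) * (1 + y ^ β)) := by
          gcongr <;> linarith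
        _ = _ := by ring
    · have h1 : T (x * Real.exp u / y) ≤ D * S (y0 * (x * Real.exp u) / y) := by
        rw [mul_div_assoc y0]; exact hTS _ (by positivity)
      calc T (x * Real.exp u / y) ≤ D * (C * y ^ β * S (y0 * (x * Real.exp u))) :=
          h1.trans (by gcongr; exact hpot _ hwx y h)
        _ ≤ D * (C * y ^ β * (r * S x)) := by gcongr
        _ = (D * r * S x) * (C * y ^ β) := by ring
        _ ≤ (D * r * S x) * ((1 + C) * (1 + y ^ β)) := by
          gcongr <;> linarith
        _ = _ := by ring
  -- the truncation `max (s n) 0` makes every term of the sequence antitone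
  obtain ⟨φ, hφ, g, hg, hlim'⟩ := helly_antitone
    (fun n u => T (max (s n) 0 * Real.exp u) / S (s n))
    (fun n u v huv => div_le_div_of_nonneg_right (hT (mul_le_mul_of_nonneg_left
      (Real.exp_le_exp.2 huv) (le_max_right _ _))) (hS0 _))
    (fun u => by
      obtain ⟨K, hK0, hK⟩ := hdom u
      refine ⟨K * (1 + 1 ^ β), ?_⟩
      filter_upwards [hs.eventually hK, hs.eventually (eventually_ge_atTop 0)] with n hn hn0
      rw [max_eq_left hn0]
      have := hn 1 one_pos
      rw [div_one] at this
      exact ⟨div_nonneg (hT0 _) (hS0 _), this⟩)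
  have hsφ : Tendsto (fun n => s (φ n)) atTop atTop := hs.comp hφ.tendsto_atTop
  have hlim : ∀ u, Tendsto (fun n => T (s (φ n) * Real.exp u) / S (s (φ n))) atTop
      (𝓝 (g u)) := fun u => by
    refine (hlim' u).congr' ?_
    filter_upwards [hsφ.eventually (eventually_ge_atTop 0)] with n hn
    rw [max_eq_left hn]
  have hg0 : ∀ u, 0 ≤ g u := fun u => ge_of_tendsto' (hlim u) fun n => div_nonneg (hT0 _) (hS0 _)
  -- this bound makes `exp (α * u) * g u` bounded
  have hgB : ∀ u, g u ≤ D * (y0 * Real.exp u) ^ (-α) := by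
    intro u
    refine le_of_tendsto_of_tendsto (hlim u) (((hSu u).comp hsφ).const_mul D) ?_
    filter_upwards [hsφ.eventually (eventually_gt_atTop 0)] with n hn
    simp only [Function.comp_apply]
    rw [mul_div_assoc']
    exact div_le_div_of_nonneg_right (hTS _ (by positivity)) (hS0 _)
  -- the limiting convolution equation
  have hconv : ∀ u, ∫ y, g (u - Real.log y) ∂ν = Real.exp (-(α * u)) := by
    intro u
    obtain ⟨K, hK0, hK⟩ := hdom u
    have h1 : Tendsto (fun n => ∫ y, T (s (φ n) * Real.exp (u - Real.log y)) / S (s (φ n)) ∂ν) atTop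
        (𝓝 (∫ y, g (u - Real.log y) ∂ν)) := by
      refine tendsto_integral_filter_of_dominated_convergence (fun y => K * (1 + y ^ β)) ?_ ?_
        (((integrable_const (1:ℝ)).add hI).const_mul K) ?_
      · refine Eventually.of_forall fun n => ?_
        have hm : Measurable fun y => T (s (φ n) * Real.exp (u - Real.log y)) :=
          hT.measurable.comp (by fun_prop)
        exact (hm.div_const _).aestronglyMeasurable
      · filter_upwards [hsφ.eventually hK] with n hn
        filter_upwards [hpos] with y hy
        rw [Real.norm_of_nonneg (div_nonneg (hT0 _) (hS0 _)), Real.exp_sub, Real.exp_log hy,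
          mul_div_assoc']
        exact hn y hy
      · exact Eventually.of_forall fun y => hlim _
    have h2 : Tendsto (fun n => S (Real.exp u * s (φ n)) / S (s (φ n))) atTop
        (𝓝 ((Real.exp u) ^ (-α))) := (hSlim _ (Real.exp_pos u)).comp hsφ
    have h3 : (Real.exp u) ^ (-α) = Real.exp (-(α * u)) := by
      rw [← Real.exp_mul]; congr 1; ring
    rw [h3] at h2
    refine tendsto_nhds_unique h1 (h2.congr fun n => ?_)
    rw [integral_div, hST]
    congr 1
    refine integral_congr_ae ?_
    filter_upwards [hpos] with y hy
    rw [Real.exp_sub, Real.exp_log hy]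
    congr 1; ring
  have hIα : Integrable (fun y : ℝ => y ^ α) ν := integrable_rpow_of_le ν hpos hI hα.le hαβ.le
  have := isFiniteMeasure_logTilt α ν hIα
  have hhm : Measurable fun u => Real.exp (α * u) * g u := by
    have := hg.measurable; fun_prop
  have hc : ∀ u, ContinuousAt g u → g u = Real.exp (-(α * u)) * (1 / ∫ y, y ^ α ∂ν) := by
    intro u hu
    have h1 := eq_of_conv_eq_one (logTilt α ν) (contDiff_measFourier_logTilt ν hpos hα hαβ hI) hnz
      (fun u => Real.exp (α * u) * g u) hhm (D * y0 ^ (-α)) ?_ ?_ u (by fun_prop)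
    · rw [measFourier_logTilt_zero α ν hpos] at h1
      have h2 : Real.exp (α * u) * g u = 1 / ∫ y, y ^ α ∂ν := by exact_mod_cast h1
      rw [← h2, ← mul_assoc, ← Real.exp_add]; simp
    · intro u
      rw [abs_of_nonneg (mul_nonneg (Real.exp_pos _).le (hg0 u))]
      calc Real.exp (α * u) * g u
          ≤ Real.exp (α * u) * (D * (y0 * Real.exp u) ^ (-α)) := by gcongr; exact hgB u
        _ = D * y0 ^ (-α) * (Real.exp (α * u) * Real.exp (-(α * u))) := by
          rw [Real.mul_rpow hy0.le (Real.exp_pos u).le, ← Real.exp_mul]; ring_nf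
        _ = D * y0 ^ (-α) := by rw [← Real.exp_add]; simp
    · intro u
      have hsm : StronglyMeasurable fun w => Real.exp (α * (u - w)) * g (u - w) :=
        (hhm.comp (measurable_const.sub measurable_id)).stronglyMeasurable
      rw [integral_logTilt α ν hpos _ hsm]
      have h1 : ∫ y, y ^ α • (Real.exp (α * (u - Real.log y)) * g (u - Real.log y)) ∂ν =
          ∫ y, Real.exp (α * u) * g (u - Real.log y) ∂ν := by
        refine integral_congr_ae ?_
        filter_upwards [hpos] with y hy
        rw [smul_eq_mul, ← mul_assoc, Real.rpow_def_of_pos hy, ← Real.exp_add]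
        congr 2; ring
      rw [h1, integral_const_mul, hconv, ← Real.exp_add]; simp
  refine ⟨φ, ?_⟩
  -- `g` is monotone, so its values at the dense set of continuity points determine it everywhere
  have h0 : g 0 = 1 / ∫ y, y ^ α ∂ν := by
    have hdense : Dense {u | ContinuousAt g u} := by
      have := hg.countable_not_continuousAt.dense_compl ℝ
      refine this.mono fun u hu => ?_
      simpa using hu
    have hF : Continuous fun u : ℝ => Real.exp (-(α * u)) * (1 / ∫ y, y ^ α ∂ν) := by fun_prop
    have hF0 : Real.exp (-(α * 0)) * (1 / ∫ y, y ^ α ∂ν) = 1 / ∫ y, y ^ α ∂ν := by simp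
    rw [← hF0]
    apply le_antisymm
    · by_contra! hlt
      obtain ⟨e, he, hball⟩ := Metric.eventually_nhds_iff.1
        ((hF.tendsto 0).eventually (gt_mem_nhds hlt))
      obtain ⟨u, hu, hu1, hu2⟩ := hdense.exists_between (show -e < 0 by linarith)
      have := hball (y := u) (by rw [Real.dist_eq, sub_zero, abs_of_neg hu2]; linarith)
      linarith [hg hu2.le, hc u hu]
    · by_contra! hlt
      obtain ⟨e, he, hball⟩ := Metric.eventually_nhds_iff.1
        ((hF.tendsto 0).eventually (lt_mem_nhds hlt))
      obtain ⟨u, hu, hu1, hu2⟩ := hdense.exists_between he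
      have := hball (y := u) (by rw [Real.dist_eq, sub_zero, abs_of_pos hu1]; linarith)
      linarith [hg hu1.le, hc u hu]
  simpa [h0] using hlim 0

/-- Sufficiency of nonvanishing: the tails of `Z` and `Y Z` have a positive limiting ratio, so `Z`
inherits regular variation. -/
lemma rvDetRV_of_mellin_ne_zero (ν : Measure ℝ) [IsProbabilityMeasure ν] (hsupp : ν (Iic 0) = 0)
    (hpos : ∀ᵐ y ∂ν, 0 < y) {α β : ℝ} (hα : 0 < α) (hαβ : α < β)
    (hI : Integrable (fun y => y ^ β) ν)
    (hnz : ∀ θ : ℝ, complexMGF Real.log ν ((α : ℂ) + (θ : ℂ) * Complex.I) ≠ 0) :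
    RVDetRV α ν := by
  intro Ω _ P _ Y Z hY hZ hYν hind hX
  have : IsProbabilityMeasure (P.map Z) := Measure.isProbabilityMeasure_map hZ.aemeasurable
  have hYZ : Measurable fun ω => Y ω * Z ω := hY.mul hZ
  have : IsProbabilityMeasure (P.map fun ω => Y ω * Z ω) :=
    Measure.isProbabilityMeasure_map hYZ.aemeasurable
  rw [hasRegVarTail_iff] at hX ⊢
  obtain ⟨hSpos, hSlim⟩ := hX
  set S : ℝ → ℝ := fun x => (P.map fun ω => Y ω * Z ω).real (Ioi x) with hSdef
  set T : ℝ → ℝ := fun x => (P.map Z).real (Ioi x) with hTdef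
  have hT : Antitone T := fun a b hab => measureReal_mono (Ioi_subset_Ioi hab)
  have hS : Antitone S := fun a b hab => measureReal_mono (Ioi_subset_Ioi hab)
  have hST : ∀ x, S x = ∫ y, T (x / y) ∂ν := fun x => by
    rw [← hYν]
    exact tail_mul_eq_integral P Y Z hY hZ (by rw [hYν]; exact hsupp) hind x
  have hnz' : ∀ ξ, measFourier (logTilt α ν) ξ ≠ 0 := fun ξ => by
    rw [measFourier_logTilt α ν hpos]; exact hnz _
  have hratio : Tendsto (fun x => T x / S x) atTop (𝓝 (1 / ∫ y, y ^ α ∂ν)) :=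
    tendsto_of_subseq_tendsto fun s hs =>
      exists_subseq_tendsto_ratio ν hpos hα hαβ hI hnz' T S hT (fun _ => measureReal_nonneg)
        (fun _ => measureReal_le_one) hS (fun _ => measureReal_le_one) hST hSpos hSlim s hs
  have hne : (∫ y, y ^ α ∂ν) ≠ 0 := by
    have h1 := hnz' 0
    rw [measFourier_logTilt_zero α ν hpos] at h1
    exact_mod_cast h1
  have hc : 0 < 1 / ∫ y, y ^ α ∂ν := by
    refine one_div_pos.2 (lt_of_le_of_ne (integral_nonneg_of_ae ?_) hne.symm)
    filter_upwards [hpos] with y hy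
    simp only [Pi.zero_apply]; positivity
  have hTpos : ∀ᶠ x in atTop, 0 < T x := by
    filter_upwards [hratio.eventually (lt_mem_nhds hc), hSpos] with x hx hSx
    exact (div_pos_iff_of_pos_right hSx).1 hx
  refine ⟨hTpos, fun c hc0 => ?_⟩
  have hcx : Tendsto (fun x : ℝ => c * x) atTop atTop := tendsto_id.const_mul_atTop hc0
  have h1 := ((hratio.comp hcx).mul (hSlim c hc0)).div hratio hc.ne'
  rw [mul_div_right_comm, div_self hc.ne', one_mul] at h1
  refine h1.congr' ?_
  filter_upwards [hTpos, hSpos, hcx.eventually hSpos] with x h2 h3 h4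
  simp only [Function.comp_apply, Pi.div_apply]
  change T (c * x) / S (c * x) * (S (c * x) / S x) / (T x / S x) = T (c * x) / T x
  have h3' : 0 < S x := h3
  have h4' : 0 < S (c * x) := h4
  have h2' : 0 < T x := h2
  field_simp

/-! ### Necessity of nonvanishing -/

lemma exists_measure_of_tail (G : ℝ → ℝ) (hG : Antitone G) (hGc : Continuous G)
    (htop : Tendsto G atTop (𝓝 0)) (hbot : Tendsto G atBot (𝓝 1)) :
    ∃ ζ : Measure ℝ, IsProbabilityMeasure ζ ∧ ∀ x, ζ.real (Ioi x) = G x := by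
  let F : StieltjesFunction ℝ :=
    { toFun := fun x => 1 - G x
      mono' := fun a b hab => sub_le_sub_left (hG hab) 1
      right_continuous' := fun x => (continuous_const.sub hGc).continuousWithinAt }
  have h1 : Tendsto F atTop (𝓝 1) := by
    simpa using (tendsto_const_nhds (x := (1:ℝ))).sub htop
  have h0 : Tendsto F atBot (𝓝 0) := by
    simpa using (tendsto_const_nhds (x := (1:ℝ))).sub hbot
  refine ⟨F.measure, F.isProbabilityMeasure h0 h1, fun x => ?_⟩
  rw [measureReal_def, F.measure_Ioi h1]
  have : 1 - F x = G x := by change 1 - (1 - G x) = G x; ring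
  rw [this, ENNReal.toReal_ofReal (hG.le_of_tendsto htop x)]

/-- The function `v ↦ exp (-α v) (1 + a cos (θ v)) / (1 + a)`. Composed with `log` it becomes
`x ^ (-α)` times a log-periodic factor, normalised to equal `1` at `x = 1`. -/
def oscTail (α θ a : ℝ) (v : ℝ) : ℝ := Real.exp (-(α * v)) * (1 + a * Real.cos (θ * v)) / (1 + a)

lemma antitone_oscTail {α θ a : ℝ} (ha : 0 < a) (haα : a * (α + |θ|) ≤ α) (hα : 0 < α) :
    Antitone (oscTail α θ a) := by
  have hd : ∀ v, HasDerivAt (oscTail α θ a)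
      ((Real.exp (-(α * v)) * (-(α * 1)) * (1 + a * Real.cos (θ * v)) +
        Real.exp (-(α * v)) * (a * (-Real.sin (θ * v) * (θ * 1)))) / (1 + a)) v := by
    intro v
    have h1 : HasDerivAt (fun v => Real.exp (-(α * v))) (Real.exp (-(α * v)) * (-(α * 1))) v :=
      (((hasDerivAt_id v).const_mul α).neg).exp
    have h2 : HasDerivAt (fun v => 1 + a * Real.cos (θ * v))
        (a * (-Real.sin (θ * v) * (θ * 1))) v :=
      ((((hasDerivAt_id v).const_mul θ).cos).const_mul a).const_add 1
    exact (h1.mul h2).div_const _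
  refine antitone_of_deriv_nonpos (fun v => (hd v).differentiableAt) fun v => ?_
  rw [(hd v).deriv]
  refine div_nonpos_of_nonpos_of_nonneg ?_ (by linarith)
  have h1 : -(α * a) ≤ α * a * Real.cos (θ * v) := by
    nlinarith [Real.neg_one_le_cos (θ * v), mul_pos hα ha]
  have h2 : -(a * |θ|) ≤ a * (Real.sin (θ * v) * θ) := by
    have : |Real.sin (θ * v) * θ| ≤ |θ| := by
      rw [abs_mul]
      exact mul_le_of_le_one_left (abs_nonneg _) (Real.abs_sin_le_one _)
    nlinarith [neg_abs_le (Real.sin (θ * v) * θ)]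
  have h3 : 0 < Real.exp (-(α * v)) := Real.exp_pos _
  nlinarith

/-- Necessity of nonvanishing. If the Mellin transform vanishes at `α + iθ`, let `Z` have tail
`oscTail α θ a ∘ log` on `[1, ∞)`. The oscillation is averaged out by `Y`, so that `Y Z` has a tail
asymptotic to a multiple of `x ^ (-α)`, while `Z` is not regularly varying. -/
lemma mellin_ne_zero_of_rvDetRV (ν : Measure ℝ) [IsProbabilityMeasure ν] (hsupp : ν (Iic 0) = 0)
    (hpos : ∀ᵐ y ∂ν, 0 < y) {α : ℝ} (hα : 0 < α) (hI : Integrable (fun y => y ^ α) ν)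
    (hdet : RVDetRV α ν) (θ : ℝ) :
    complexMGF Real.log ν ((α : ℂ) + (θ : ℂ) * Complex.I) ≠ 0 := by
  intro hzero
  set A : ℝ := ∫ y, y ^ α ∂ν with hA
  have hApos : 0 < A := by
    rw [hA, integral_pos_iff_support_of_nonneg_ae ?_ hI]
    · rw [pos_iff_ne_zero]
      intro h0
      have h1 : ∀ᵐ y ∂ν, ¬ (y ^ α ≠ 0) := by
        rw [ae_iff]; simpa [Function.support] using h0
      obtain ⟨y, hy, hy1⟩ := (hpos.and h1).exists
      exact hy1 (by positivity)
    · filter_upwards [hpos] with y hy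
      simp only [Pi.zero_apply]; positivity
  have hexp : ∀ y : ℝ, 0 < y → Real.exp (α * Real.log y) = y ^ α := fun y hy => by
    rw [Real.rpow_def_of_pos hy, mul_comm]
  -- the rotated real part of the vanishing Mellin transform
  have hcos : ∀ v : ℝ, ∫ y, y ^ α * Real.cos (θ * (v - Real.log y)) ∂ν = 0 := by
    intro v
    have hint : Integrable (fun y => Complex.exp (((-(θ * v) : ℝ) : ℂ) * Complex.I) *
        Complex.exp (((α : ℂ) + (θ : ℂ) * Complex.I) * (Real.log y : ℝ))) ν := by
      refine Integrable.const_mul ?_ _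
      refine hI.mono' (by fun_prop) ?_
      filter_upwards [hpos] with y hy
      rw [Complex.norm_exp, ← hexp y hy]
      simp
    have h1 : ∫ y, Complex.exp (((-(θ * v) : ℝ) : ℂ) * Complex.I) *
        Complex.exp (((α : ℂ) + (θ : ℂ) * Complex.I) * (Real.log y : ℝ)) ∂ν = 0 := by
      rw [integral_const_mul]
      have : ∫ y, Complex.exp (((α : ℂ) + (θ : ℂ) * Complex.I) * (Real.log y : ℝ)) ∂ν = 0 := hzero
      rw [this, mul_zero]
    have h2 := congrArg Complex.re h1
    have h3 := integral_re hint
    simp only [RCLike.re_to_complex] at h3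
    rw [← h3, Complex.zero_re] at h2
    rw [← h2]
    refine integral_congr_ae ?_
    filter_upwards [hpos] with y hy
    rw [← Complex.exp_add, Complex.exp_re, ← hexp y hy]
    simp
    rw [← Real.cos_neg]; congr 1; ring
  have hθ : θ ≠ 0 := by
    rintro rfl
    have := hcos 0
    simp only [zero_mul, Real.cos_zero, mul_one] at this
    exact hApos.ne' this
  have ht : 0 < |θ| := abs_pos.2 hθ
  -- this choice of `a` is small enough for `oscTail` to be antitone
  set a : ℝ := α / (α + |θ|) with ha_def
  have ha : 0 < a := by positivity
  have ha1 : a < 1 := by rw [ha_def, div_lt_one (by positivity)]; linarith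
  have haα : a * (α + |θ|) ≤ α := by
    rw [ha_def, div_mul_cancel₀ _ (by positivity)]
  set G : ℝ → ℝ := fun z => oscTail α θ a (Real.log (max z 1)) with hGdef
  have hmax : ∀ z : ℝ, 0 < max z 1 := fun z => lt_of_lt_of_le one_pos (le_max_right _ _)
  have hlogc : Continuous fun z : ℝ => Real.log (max z 1) :=
    (continuous_id.max continuous_const).log fun z => (hmax z).ne'
  have hoscc : Continuous (oscTail α θ a) := by unfold oscTail; fun_prop
  have hG : Antitone G := (antitone_oscTail ha haα hα).comp_monotone fun z w hzw =>
    Real.log_le_log (hmax z) (max_le_max_right 1 hzw)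
  have hosc_nonneg : ∀ v, 0 ≤ oscTail α θ a v := fun v => by
    have : 0 ≤ 1 + a * Real.cos (θ * v) := by nlinarith [Real.neg_one_le_cos (θ * v)]
    unfold oscTail; positivity
  have hosc_le : ∀ v, oscTail α θ a v ≤ Real.exp (-(α * v)) := fun v => by
    unfold oscTail
    rw [div_le_iff₀ (by linarith)]
    gcongr
    nlinarith [Real.cos_le_one (θ * v)]
  have hosc_top : Tendsto (oscTail α θ a) atTop (𝓝 0) := by
    refine squeeze_zero hosc_nonneg hosc_le ?_
    exact Real.tendsto_exp_atBot.comp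
      (tendsto_neg_atTop_atBot.comp (tendsto_id.const_mul_atTop hα))
  have hosc0 : oscTail α θ a 0 = 1 := by
    simp [oscTail]
    exact (show (1 + a) ≠ 0 by positivity)
  have hGle : ∀ z, z ≤ 1 → G z = 1 := fun z hz => by
    simp only [hGdef]; rw [max_eq_right hz, Real.log_one, hosc0]
  have hGge : ∀ z, 1 ≤ z → G z = oscTail α θ a (Real.log z) := fun z hz => by
    simp only [hGdef]; rw [max_eq_left hz]
  have hGtop : Tendsto G atTop (𝓝 0) := by
    have h1 : Tendsto (fun z => oscTail α θ a (Real.log z)) atTop (𝓝 0) :=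
      hosc_top.comp Real.tendsto_log_atTop
    refine h1.congr' ?_
    filter_upwards [eventually_ge_atTop 1] with z hz
    rw [hGge z hz]
  have hGbot : Tendsto G atBot (𝓝 1) := by
    refine tendsto_const_nhds.congr' ?_
    filter_upwards [eventually_le_atBot 1] with z hz
    rw [hGle z hz]
  obtain ⟨ζ, hζ, hζG⟩ := exists_measure_of_tail G hG (hoscc.comp hlogc) hGtop hGbot
  have hYmap : (ν.prod ζ).map Prod.fst = ν := by
    rw [Measure.map_fst_prod]; simp
  have hZmap : (ν.prod ζ).map Prod.snd = ζ := by
    rw [Measure.map_snd_prod]; simp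
  have hind : IndepFun (Prod.fst : ℝ × ℝ → ℝ) Prod.snd (ν.prod ζ) :=
    indepFun_prod (X := id) (Y := id) measurable_id measurable_id
  have hmain := hdet (ℝ × ℝ) (ν.prod ζ) Prod.fst Prod.snd measurable_fst measurable_snd hYmap hind
  rw [hZmap] at hmain
  have hprod : IsProbabilityMeasure ((ν.prod ζ).map fun ω => ω.1 * ω.2) :=
    Measure.isProbabilityMeasure_map (measurable_fst.mul measurable_snd).aemeasurable
  set S : ℝ → ℝ := fun x => ((ν.prod ζ).map fun ω => ω.1 * ω.2).real (Ioi x) with hSdef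
  have hSG : ∀ x, S x = ∫ y, G (x / y) ∂ν := fun x => by
    have := tail_mul_eq_integral (ν.prod ζ) Prod.fst Prod.snd measurable_fst measurable_snd
      (by rw [hYmap]; exact hsupp) hind x
    rw [hYmap, hZmap] at this
    simp only [hζG] at this
    exact this
  have hG0 : ∀ z, 0 ≤ G z := fun z => hosc_nonneg _
  have hG1 : ∀ z, G z ≤ 1 := fun z => by rw [← hζG]; exact measureReal_le_one
  -- the tail of the product is asymptotic to a multiple of `x ^ (-α)`
  have hW : Tendsto (fun x => x ^ α * (1 + a) * S x) atTop (𝓝 A) := by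
    -- the tail of `Z` is exactly of power-times-oscillation form at `x / y ≥ 1`
    have hD0 : ∀ x y : ℝ, 0 < y → y ≤ x → x ^ α * (1 + a) * G (x / y) -
        y ^ α * (1 + a * Real.cos (θ * (Real.log x - Real.log y))) = 0 := fun x y hy hyx => by
      have hx : 0 < x := hy.trans_le hyx
      rw [hGge _ ((one_le_div hy).2 hyx), Real.log_div hx.ne' hy.ne']
      have h1 : x ^ α * Real.exp (-(α * (Real.log x - Real.log y))) = y ^ α := by
        rw [← hexp x hx, ← hexp y hy, ← Real.exp_add]; congr 1; ring
      have h2 : 1 + a ≠ 0 := by positivity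
      unfold oscTail
      rw [← h1]
      field_simp
      ring
    have hDlim : Tendsto (fun x : ℝ => ∫ y, (x ^ α * (1 + a) * G (x / y) -
        y ^ α * (1 + a * Real.cos (θ * (Real.log x - Real.log y)))) ∂ν) atTop
        (𝓝 (∫ y, (0:ℝ) ∂ν)) := by
      refine tendsto_integral_filter_of_dominated_convergence (fun y => (1 + a) * y ^ α) ?_ ?_
        (hI.const_mul _) ?_
      · refine Eventually.of_forall fun x => Measurable.aestronglyMeasurable ?_
        have : Measurable fun y => G (x / y) :=
          hG.measurable.comp (measurable_const.div measurable_id)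
        fun_prop
      · filter_upwards [eventually_gt_atTop (0:ℝ)] with x hx
        filter_upwards [hpos] with y hy
        rcases le_or_gt y x with hyx | hxy
        · rw [hD0 x y hy hyx, norm_zero]; positivity
        · rw [hGle _ ((div_le_one hy).2 hxy.le), Real.norm_eq_abs]
          have h1 : x ^ α ≤ y ^ α := Real.rpow_le_rpow hx.le hxy.le hα.le
          have h2 : 0 < x ^ α := by positivity
          have h3 : 0 < y ^ α := by positivity
          set c := Real.cos (θ * (Real.log x - Real.log y)) with hc
          have h4 : 0 ≤ 1 + a * c := by
            nlinarith [Real.neg_one_le_cos (θ * (Real.log x - Real.log y))]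
          have h5 : 1 + a * c ≤ 1 + a := by
            nlinarith [Real.cos_le_one (θ * (Real.log x - Real.log y))]
          have h6 : x ^ α * (1 + a) ≤ y ^ α * (1 + a) := by gcongr
          have h7 : y ^ α * (1 + a * c) ≤ y ^ α * (1 + a) := by gcongr
          rw [abs_le]
          constructor
          · nlinarith [mul_nonneg h2.le (by positivity : 0 ≤ 1 + a)]
          · nlinarith [mul_nonneg h3.le h4]
      · filter_upwards [hpos] with y hy
        refine tendsto_const_nhds.congr' ?_
        filter_upwards [eventually_ge_atTop y] with x hx
        exact (hD0 x y hy hx).symm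
    rw [integral_zero] at hDlim
    have h2 := hDlim.add_const A
    rw [zero_add] at h2
    refine h2.congr fun x => ?_
    have hm : Measurable fun y => G (x / y) :=
      hG.measurable.comp (measurable_const.div measurable_id)
    have hi1 : Integrable (fun y => x ^ α * (1 + a) * G (x / y)) ν := by
      refine Integrable.const_mul ?_ _
      exact (integrable_const (1:ℝ)).mono' hm.aestronglyMeasurable (Eventually.of_forall fun y => by
        rw [Real.norm_of_nonneg (hG0 _)]; exact hG1 _)
    have hi3 : Integrable (fun y => y ^ α * Real.cos (θ * (Real.log x - Real.log y))) ν := by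
      refine hI.mul_bdd (c := 1) (by fun_prop) (Eventually.of_forall fun y => ?_)
      exact Real.abs_cos_le_one _
    have hi2 : ∫ y, y ^ α * (1 + a * Real.cos (θ * (Real.log x - Real.log y))) ∂ν = A := by
      have h3 : ∀ y : ℝ, y ^ α * (1 + a * Real.cos (θ * (Real.log x - Real.log y))) =
          y ^ α + a * (y ^ α * Real.cos (θ * (Real.log x - Real.log y))) := fun y => by ring
      simp only [h3]
      rw [integral_add hI (hi3.const_mul a), integral_const_mul, hcos, mul_zero, add_zero]
    have hi4 : Integrable (fun y => y ^ α *
        (1 + a * Real.cos (θ * (Real.log x - Real.log y)))) ν := by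
      have h3 : ∀ y : ℝ, y ^ α * (1 + a * Real.cos (θ * (Real.log x - Real.log y))) =
          y ^ α + a * (y ^ α * Real.cos (θ * (Real.log x - Real.log y))) := fun y => by ring
      simp only [h3]
      exact hI.add (hi3.const_mul a)
    rw [integral_sub hi1 hi4, hi2, integral_const_mul, hSG]; ring
  have hX : HasRegVarTail ((ν.prod ζ).map fun ω => ω.1 * ω.2) α := by
    rw [hasRegVarTail_iff]
    have hSpos : ∀ᶠ x in atTop, 0 < S x := by
      filter_upwards [hW.eventually (lt_mem_nhds hApos), eventually_gt_atTop 0] with x hx hx0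
      have : 0 < x ^ α * (1 + a) := by positivity
      exact (pos_iff_pos_of_mul_pos hx).1 this
    refine ⟨hSpos, fun c hc => ?_⟩
    have hcx : Tendsto (fun x : ℝ => c * x) atTop atTop := tendsto_id.const_mul_atTop hc
    have h1 := ((hW.comp hcx).div hW hApos.ne').const_mul (c ^ (-α))
    rw [div_self hApos.ne', mul_one] at h1
    refine h1.congr' ?_
    filter_upwards [hSpos, eventually_gt_atTop 0] with x hx hx0
    change c ^ (-α) * ((c * x) ^ α * (1 + a) * S (c * x) / (x ^ α * (1 + a) * S x)) =
      S (c * x) / S x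
    rw [Real.mul_rpow hc.le hx0.le, Real.rpow_neg hc.le]
    have : 0 < x ^ α := by positivity
    have : 0 < c ^ α := by positivity
    have : 0 < 1 + a := by positivity
    have : 0 < S x := hx
    field_simp
  obtain ⟨-, hlim⟩ := (hasRegVarTail_iff ζ α).1 (hmain hX)
  simp only [hζG] at hlim
  -- along `exp (2 π n / |θ|)` the ratio of tails at distance `exp (π / |θ|)` misses the
  -- required limit by the factor `(1 - a) / (1 + a)`
  have hlimc := hlim (Real.exp (Real.pi / |θ|)) (Real.exp_pos _)
  have hseq : Tendsto (fun n : ℕ => Real.exp (n * (2 * Real.pi) / |θ|)) atTop atTop := by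
    refine Real.tendsto_exp_atTop.comp ?_
    refine Tendsto.atTop_div_const ht ?_
    exact tendsto_natCast_atTop_atTop.atTop_mul_const Real.two_pi_pos
  have hcosabs : ∀ v, Real.cos (θ * v) = Real.cos (|θ| * v) := fun v => by
    rcases abs_choice θ with h | h
    · rw [h]
    · rw [h, neg_mul, Real.cos_neg]
  have hval : ∀ n : ℕ, G (Real.exp (Real.pi / |θ|) * Real.exp (n * (2 * Real.pi) / |θ|)) /
      G (Real.exp (n * (2 * Real.pi) / |θ|)) =
      Real.exp (Real.pi / |θ|) ^ (-α) * ((1 - a) / (1 + a)) := by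
    intro n
    have hn0 : 0 ≤ n * (2 * Real.pi) / |θ| := by positivity
    have hp0 : 0 ≤ Real.pi / |θ| := by positivity
    rw [← Real.exp_add, hGge _ (Real.one_le_exp (by positivity)),
      hGge _ (Real.one_le_exp hn0), Real.log_exp, Real.log_exp]
    unfold oscTail
    rw [hcosabs, hcosabs]
    have e1 : |θ| * (Real.pi / |θ| + n * (2 * Real.pi) / |θ|) = Real.pi + n * (2 * Real.pi) := by
      field_simp
    have e2 : |θ| * (n * (2 * Real.pi) / |θ|) = n * (2 * Real.pi) := by field_simp
    rw [e1, e2, Real.cos_add_nat_mul_two_pi, Real.cos_nat_mul_two_pi, Real.cos_pi,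
      ← Real.exp_mul]
    have e3 : -(α * (Real.pi / |θ| + n * (2 * Real.pi) / |θ|)) =
        Real.pi / |θ| * -α + -(α * (n * (2 * Real.pi) / |θ|)) := by ring
    rw [e3, Real.exp_add]
    generalize Real.exp (Real.pi / |θ| * -α) = p
    have hq : 0 < Real.exp (-(α * (n * (2 * Real.pi) / |θ|))) := Real.exp_pos _
    generalize Real.exp (-(α * (n * (2 * Real.pi) / |θ|))) = q at hq
    have : 0 < 1 + a := by positivity
    field_simp
    ring
  have h5 := tendsto_nhds_unique (hlimc.comp hseq)
    (tendsto_const_nhds.congr fun n => (hval n).symm)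
  have h6 : 0 < Real.exp (Real.pi / |θ|) ^ (-α) := by positivity
  have h7 : (1 - a) / (1 + a) = 1 := by
    have := mul_left_cancel₀ h6.ne' (h5.symm.trans (mul_one _).symm)
    exact this
  rw [div_eq_one_iff_eq (by positivity)] at h7
  linarith

/-! ### The characterisation -/

/-- Theorem 4.2. A positive random variable `Y` (with law `ν` on
`(0,∞)`) satisfying `E Y^{α+δ} < ∞` for some `δ > 0` is `α`-regular variation
determining if and only if `E[Y^{α+iθ}] ≠ 0` for all `θ ∈ ℝ`. -/
theorem rvDetRV_iff_mellin_nonvanishing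
    (α : ℝ) (hα : 0 < α) (ν : Measure ℝ) [IsProbabilityMeasure ν] (hsupp : ν (Iic 0) = 0)
    (hmom : ∃ δ : ℝ, 0 < δ ∧ ∫⁻ y in Ioi (0:ℝ), ENNReal.ofReal (y ^ (α + δ)) ∂ν < ⊤) :
    RVDetRV α ν ↔
      ∀ θ : ℝ, (∫ y in Ioi (0:ℝ), (y : ℂ) ^ ((α : ℂ) + (θ : ℂ) * Complex.I) ∂ν) ≠ 0 := by
  obtain ⟨δ, hδ, hfin⟩ := hmom
  have hpos : ∀ᵐ y ∂ν, 0 < y := by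
    rw [ae_iff]; simpa [Set.Iic_def] using hsupp
  have hI : Integrable (fun y => y ^ (α + δ)) ν := by
    rw [Measure.restrict_eq_self_of_ae_mem (s := Ioi (0:ℝ)) hpos] at hfin
    refine ⟨by fun_prop, ?_⟩
    rwa [hasFiniteIntegral_iff_ofReal (hpos.mono fun y hy => Real.rpow_nonneg hy.le _)]
  simp only [mellin_eq_complexMGF ν hpos]
  exact ⟨fun hdet θ => mellin_ne_zero_of_rvDetRV ν hsupp hpos hα
      (integrable_rpow_of_le ν hpos hI hα.le (by linarith)) hdet θ,
    fun h => rvDetRV_of_mellin_ne_zero ν hsupp hpos hα (by linarith : α < α + δ) hI h⟩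
end
end

section
/- Let α > 0 and let Y be a positive random variable with EY^{α+δ} < ∞ for some δ > 0, such that P(Y = x₀) > 0 for some x₀ > 0. If E[Y^α 1(Y ≠ x₀)] < x₀^α P(Y = x₀), then Y is α-regular variation determining. -/
open MeasureTheory Set Filter ProbabilityTheory
open scoped ENNReal Topology

noncomputable section

/-!
Write `G` for the tail of `Z`, `H` for the tail of `Y Z`, `p = P(Y = x₀)`, and let `μ` be the law
of `Y` restricted to `(0, ∞) \ {x₀}`. Independence gives `H x = p G(x / x₀) + ∫ G(x / y) μ(dy)`.
Dividing by `H x`, the quotient `g x = G(x / x₀) / H x`, which is at most `1 / p`, satisfies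
`1 = p g(x) + ∫ g(x x₀ / y) r(x, y) μ(dy)` with `r(x, y) = H(x x₀ / y) / H x → (y / x₀) ^ α`.

Since `H` is monotone and regularly varying, a Potter-type bound (`potter`) controls `r(x, y)` by
a multiple of `1 + (y / x₀) ^ (α + δ)` for all `y > 0` and all large `x`, and this is integrable.
Put `m = ∫ (y / x₀) ^ α μ(dy)`; the hypothesis on the atom says `m < p`. If `|g - l| ≤ u`
eventually, where `l = 1 / (p + m)`, then dominated convergence in the equation for `g` yields
`|g - l| ≤ q u` eventually, for any fixed `q ∈ (m / p, 1)`. Iterating, `g → l > 0`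
(`tendsto_of_renewal`). Hence `G(x / x₀) ~ l H x`, and `G` inherits regular variation from `H`.
-/

/-! ### The contraction argument -/

/-- If `d` is bounded and eventually at most `u`, then its averages against kernels `r x → w`
are eventually below any `v > u ∫ w`. -/
theorem contraction_step {μ : Measure ℝ} {d τ w b : ℝ → ℝ} {r : ℝ → ℝ → ℝ} {B X u v : ℝ}
    (hτ : ∀ᵐ y ∂μ, 0 < τ y) (hτm : Measurable τ)
    (hd : Measurable d) (hd0 : ∀ x, 0 ≤ d x) (hdB : ∀ x, 0 < x → d x ≤ B)
    (hrm : ∀ x, Measurable (r x)) (hr0 : ∀ x y, 0 ≤ r x y)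
    (hrb : ∀ x, X ≤ x → ∀ᵐ y ∂μ, r x y ≤ b y) (hb : Integrable b μ)
    (hrw : ∀ᵐ y ∂μ, Tendsto (fun x => r x y) atTop (𝓝 (w y)))
    (hu : 0 ≤ u) (hdu : ∀ᶠ x in atTop, d x ≤ u) (hv : u * ∫ y, w y ∂μ < v) :
    ∀ᶠ x in atTop, ∫ y, d (x * τ y) * r x y ∂μ < v := by
  -- the part of `d` above the level `u` is eventually zero, so it does not survive in the limit
  set e : ℝ → ℝ := fun x => max (d x - u) 0 with he
  have hem : Measurable e := (hd.sub_const u).max measurable_const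
  have hlim : Tendsto (fun x => ∫ y, (u + e (x * τ y)) * r x y ∂μ) atTop
      (𝓝 (∫ y, u * w y ∂μ)) := by
    refine tendsto_integral_filter_of_dominated_convergence (fun y => (u + B) * b y) ?_ ?_
      (hb.const_mul _) ?_
    · refine Eventually.of_forall fun x => Measurable.aestronglyMeasurable ?_
      have := hrm x
      fun_prop
    · filter_upwards [eventually_ge_atTop X, eventually_gt_atTop 0] with x hx hx0
      filter_upwards [hτ, hrb x hx] with y hy hry
      have hB := hdB _ (mul_pos hx0 hy)
      have h0 := hd0 (x * τ y)
      have he0 : 0 ≤ e (x * τ y) := le_max_right _ _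
      have heB : e (x * τ y) ≤ B := max_le (by linarith) (by linarith)
      rw [Real.norm_of_nonneg (mul_nonneg (by linarith) (hr0 x y))]
      exact mul_le_mul (by linarith) hry (hr0 x y) (by linarith)
    · filter_upwards [hτ, hrw] with y hy hry
      have ht : Tendsto (fun x : ℝ => x * τ y) atTop atTop := tendsto_id.atTop_mul_const hy
      refine (hry.const_mul u).congr' ?_
      filter_upwards [ht.eventually hdu] with x hx
      have : e (x * τ y) = 0 := max_eq_right (by linarith)
      rw [this, add_zero]
  rw [integral_const_mul] at hlim
  filter_upwards [hlim.eventually_lt_const hv, eventually_ge_atTop X, eventually_gt_atTop 0]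
    with x hx hxX hx0
  refine lt_of_le_of_lt (integral_mono_of_nonneg ?_ ?_ ?_) hx
  · exact Eventually.of_forall fun y => mul_nonneg (hd0 _) (hr0 x y)
  · refine (hb.const_mul (u + B)).mono' ?_ ?_
    · refine Measurable.aestronglyMeasurable ?_
      have := hrm x
      fun_prop
    · filter_upwards [hτ, hrb x hxX] with y hy hry
      have hB := hdB _ (mul_pos hx0 hy)
      have h0 := hd0 (x * τ y)
      have he0 : 0 ≤ e (x * τ y) := le_max_right _ _
      have heB : e (x * τ y) ≤ B := max_le (by linarith) (by linarith)
      rw [Real.norm_of_nonneg (mul_nonneg (by linarith) (hr0 x y))]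
      exact mul_le_mul (by linarith) hry (hr0 x y) (by linarith)
  · refine Eventually.of_forall fun y => mul_le_mul_of_nonneg_right ?_ (hr0 x y)
    have : d (x * τ y) - u ≤ e (x * τ y) := le_max_left _ _
    linarith

/-- A bounded solution of `p g(x) + ∫ g(x τ(y)) r(x, y) μ(dy) = 1`, whose kernel converges
dominatedly to some `w` with `∫ w < p`, converges to the constant solution of the limiting
equation. The inequality `∫ w < p` makes the equation contract `|g - l|` at infinity. -/
theorem tendsto_of_renewal {μ : Measure ℝ} {g τ w b : ℝ → ℝ} {r : ℝ → ℝ → ℝ} {B X p : ℝ}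
    (hp : 0 < p) (hτ : ∀ᵐ y ∂μ, 0 < τ y) (hτm : Measurable τ)
    (hg : Measurable g) (hgB : ∀ x, 0 < x → |g x| ≤ B)
    (hrm : ∀ x, Measurable (r x)) (hr0 : ∀ x y, 0 ≤ r x y)
    (hrb : ∀ x, X ≤ x → ∀ᵐ y ∂μ, r x y ≤ b y) (hb : Integrable b μ)
    (hrw : ∀ᵐ y ∂μ, Tendsto (fun x => r x y) atTop (𝓝 (w y)))
    (hw0 : 0 ≤ ∫ y, w y ∂μ) (hwp : ∫ y, w y ∂μ < p)
    (heq : ∀ x, 0 < x → p * g x + ∫ y, g (x * τ y) * r x y ∂μ = 1) :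
    Tendsto g atTop (𝓝 (p + ∫ y, w y ∂μ)⁻¹) := by
  set m := ∫ y, w y ∂μ with hm
  set l := (p + m)⁻¹ with hl
  have hl0 : 0 < l := by positivity
  have hlm : (p + m) * l = 1 := mul_inv_cancel₀ (by positivity)
  set d : ℝ → ℝ := fun x => |g x - l| with hd
  have hdm : Measurable d := by fun_prop
  have hd0 : ∀ x, 0 ≤ d x := fun x => abs_nonneg _
  have hdB : ∀ x, 0 < x → d x ≤ B + l := fun x hx => by
    have := abs_sub (g x) l
    have := hgB x hx
    rw [abs_of_pos hl0] at *
    simp only [hd]; linarith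
  have hB0 : 0 ≤ B := (abs_nonneg _).trans (hgB 1 one_pos)
  have hrint : ∀ x, X ≤ x → Integrable (r x) μ := fun x hx =>
    hb.mono' (hrm x).aestronglyMeasurable (by
      filter_upwards [hrb x hx] with y hy
      rwa [Real.norm_of_nonneg (hr0 x y)])
  have hR : Tendsto (fun x => ∫ y, r x y ∂μ) atTop (𝓝 m) := by
    refine tendsto_integral_filter_of_dominated_convergence b ?_ ?_ hb hrw
    · exact Eventually.of_forall fun x => (hrm x).aestronglyMeasurable
    · filter_upwards [eventually_ge_atTop X] with x hx
      filter_upwards [hrb x hx] with y hy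
      rwa [Real.norm_of_nonneg (hr0 x y)]
  -- subtract `(p + m) * l = 1` from the equation for `g` and take absolute values
  have hkey : ∀ᶠ x in atTop,
      p * d x ≤ l * |m - ∫ y, r x y ∂μ| + ∫ y, d (x * τ y) * r x y ∂μ := by
    filter_upwards [eventually_ge_atTop X, eventually_gt_atTop 0] with x hx hx0
    have hri := hrint x hx
    have hgi : Integrable (fun y => g (x * τ y) * r x y) μ := by
      refine (hri.const_mul B).mono' ?_ ?_
      · refine Measurable.aestronglyMeasurable ?_
        have := hrm x
        fun_prop
      · filter_upwards [hτ] with y hy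
        rw [norm_mul, Real.norm_eq_abs, Real.norm_of_nonneg (hr0 x y)]
        exact mul_le_mul_of_nonneg_right (hgB _ (mul_pos hx0 hy)) (hr0 x y)
    have h1 : ∫ y, (g (x * τ y) - l) * r x y ∂μ
        = ∫ y, g (x * τ y) * r x y ∂μ - l * ∫ y, r x y ∂μ := by
      simp only [sub_mul]
      rw [integral_sub hgi (hri.const_mul l), integral_const_mul]
    have h2 : |∫ y, (g (x * τ y) - l) * r x y ∂μ| ≤ ∫ y, d (x * τ y) * r x y ∂μ := by
      refine (abs_integral_le_integral_abs).trans (le_of_eq ?_)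
      refine integral_congr_ae (Eventually.of_forall fun y => ?_)
      simp only [hd, abs_mul, abs_of_nonneg (hr0 x y)]
    have h3 : p * (g x - l) = l * (m - ∫ y, r x y ∂μ)
        - ∫ y, (g (x * τ y) - l) * r x y ∂μ := by
      rw [h1]; linarith [heq x hx0]
    have h4 : p * d x = |p * (g x - l)| := by
      simp only [hd, abs_mul, abs_of_pos hp]
    rw [h4, h3]
    refine (abs_sub _ _).trans (add_le_add ?_ h2)
    rw [abs_mul, abs_of_pos hl0]
  have hsmall : Tendsto (fun x => l * |m - ∫ y, r x y ∂μ|) atTop (𝓝 0) := by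
    simpa using ((hR.const_sub m).abs).const_mul l
  obtain ⟨q, hq1, hq2⟩ : ∃ q, m / p < q ∧ q < 1 := exists_between ((div_lt_one hp).2 hwp)
  have hq0 : 0 < q := lt_of_le_of_lt (by positivity) hq1
  rw [div_lt_iff₀ hp] at hq1
  have hstep : ∀ n : ℕ, ∀ᶠ x in atTop, d x ≤ (B + l) * q ^ n := by
    intro n
    induction n with
    | zero =>
      filter_upwards [eventually_gt_atTop 0] with x hx
      simpa using hdB x hx
    | succ n ih =>
      set u := (B + l) * q ^ n with hu
      have hu0 : 0 < u := by positivity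
      obtain ⟨v, hv1, hv2⟩ : ∃ v, u * m < v ∧ v < u * (q * p) :=
        exists_between (mul_lt_mul_of_pos_left hq1 hu0)
      have hc := contraction_step hτ hτm hdm hd0 hdB hrm hr0 hrb hb hrw hu0.le ih hv1
      filter_upwards [hkey, hc, hsmall.eventually_lt_const (sub_pos.2 hv2)] with x h1 h2 h3
      have : p * d x ≤ p * (u * q) := by linarith
      have := le_of_mul_le_mul_left this hp
      rw [pow_succ]; linarith
  rw [tendsto_iff_norm_sub_tendsto_zero]
  refine tendsto_order.2 ⟨fun a ha => Eventually.of_forall fun x => ha.trans_le (norm_nonneg _),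
    fun a ha => ?_⟩
  have hpow : Tendsto (fun n : ℕ => (B + l) * q ^ n) atTop (𝓝 0) := by
    simpa using (tendsto_pow_atTop_nhds_zero_of_lt_one hq0.le hq2).const_mul (B + l)
  obtain ⟨n, hn⟩ := (hpow.eventually_lt_const ha).exists
  filter_upwards [hstep n] with x hx
  exact lt_of_le_of_lt hx hn

/-! ### A Potter-type bound -/

/-- Iterating the doubling inequality `H (x / 2) ≤ K * H x`, valid only for `x ≥ X`, costs no more
than a factor `1 / H X` once `x / 2 ^ j` drops below `X`. -/
theorem potter_dyadic {H : ℝ → ℝ} {K X : ℝ} (hH : Antitone H) (hpos : ∀ x, 0 < H x)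
    (hle : ∀ x, H x ≤ 1) (hK : 1 ≤ K)
    (hdouble : ∀ x, X ≤ x → H (x / 2) ≤ K * H x) (k : ℕ) :
    ∀ x, X ≤ x → H (x / 2 ^ k) ≤ (H X)⁻¹ * K ^ k * H x := by
  have hD : 1 ≤ (H X)⁻¹ := (one_le_inv₀ (hpos X)).2 (hle X)
  have hK0 : 0 < K := by linarith
  induction k with
  | zero =>
    intro x hx
    simpa using le_mul_of_one_le_left (hpos x).le hD
  | succ k ih =>
    intro x hx
    have hDK : 0 ≤ (H X)⁻¹ * K ^ k := by have := hpos X; positivity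
    have hmul := mul_le_mul_of_nonneg_left (hdouble x hx) hDK
    have hhalf : H (x / 2 ^ (k + 1)) ≤ (H X)⁻¹ * K ^ k * H (x / 2) := by
      by_cases h : X ≤ x / 2
      · have := ih (x / 2) h
        rwa [div_div, ← pow_succ'] at this
      · -- below the threshold `X`, the trivial bound `H ≤ 1 ≤ H (x / 2) / H X` is enough
        have h1 : H X ≤ H (x / 2) := hH (not_le.1 h).le
        have h2 : 1 ≤ (H X)⁻¹ * H (x / 2) := by
          rw [inv_mul_eq_div]; exact (one_le_div (hpos X)).2 h1
        have h3 : 1 ≤ K ^ k := one_le_pow₀ hK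
        calc H (x / 2 ^ (k + 1)) ≤ 1 := hle _
          _ ≤ K ^ k * ((H X)⁻¹ * H (x / 2)) := one_le_mul_of_one_le_of_one_le h3 h2
          _ = _ := by ring
    calc _ ≤ _ := hhalf
      _ ≤ _ := hmul
      _ = _ := by rw [pow_succ]; ring

/-- A Potter-type upper bound for a monotone tail `H`, which needs the regular variation limit only
for the ratio `2`. As `H ≤ 1`, it holds for every `t > 0`, however small `x / t` is. -/
theorem potter {H : ℝ → ℝ} {α β : ℝ} (hαβ : α < β) (hβ : 0 < β) (hH : Antitone H)
    (hpos : ∀ x, 0 < H x) (hle : ∀ x, H x ≤ 1)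
    (hrv : Tendsto (fun x => H (x / 2) / H x) atTop (𝓝 (2 ^ α))) :
    ∃ C X : ℝ, ∀ x, X ≤ x → ∀ t, 0 < t → H (x / t) / H x ≤ C * (1 + t ^ β) := by
  have h2 : (2 : ℝ) ^ α < 2 ^ β := Real.rpow_lt_rpow_of_exponent_lt one_lt_two hαβ
  obtain ⟨X₀, hX₀⟩ := eventually_atTop.1 (hrv.eventually_lt_const h2)
  set X := max X₀ 1
  have hX : 0 < X := lt_max_of_lt_right one_pos
  have hK : (1 : ℝ) ≤ 2 ^ β := Real.one_le_rpow one_le_two hβ.le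
  have hdouble : ∀ x, X ≤ x → H (x / 2) ≤ 2 ^ β * H x := fun x hx =>
    ((div_lt_iff₀ (hpos x)).1 (hX₀ x ((le_max_left _ _).trans hx))).le
  have hD : 1 ≤ (H X)⁻¹ := (one_le_inv₀ (hpos X)).2 (hle X)
  refine ⟨(H X)⁻¹ * 2 ^ β, X, fun x hx t ht => ?_⟩
  have hx0 : 0 < x := hX.trans_le hx
  have hC : 1 ≤ (H X)⁻¹ * 2 ^ β := one_le_mul_of_one_le_of_one_le hD hK
  have htβ : 0 < t ^ β := Real.rpow_pos_of_pos ht β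
  rw [div_le_iff₀ (hpos x)]
  rcases le_total t 1 with h1 | h1
  · have hxt : x ≤ x / t := by rw [le_div_iff₀ ht]; nlinarith
    refine (hH hxt).trans (le_mul_of_one_le_left (hpos x).le ?_)
    exact one_le_mul_of_one_le_of_one_le hC (by linarith)
  · obtain ⟨k, hk1, hk2⟩ := exists_nat_pow_near h1 one_lt_two
    have hxt : x / 2 ^ (k + 1) ≤ x / t := div_le_div_of_nonneg_left hx0.le ht hk2.le
    have hkt : ((2 : ℝ) ^ β) ^ k ≤ t ^ β := by
      rw [← Real.rpow_natCast, ← Real.rpow_mul (by norm_num), mul_comm, Real.rpow_mul (by norm_num),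
        Real.rpow_natCast]
      exact Real.rpow_le_rpow (by positivity) hk1 hβ.le
    refine (hH hxt).trans ((potter_dyadic hH hpos hle hK hdouble (k + 1) x hx).trans ?_)
    refine mul_le_mul_of_nonneg_right ?_ (hpos x).le
    rw [pow_succ, mul_comm (((2 : ℝ) ^ β) ^ k), ← mul_assoc]
    exact mul_le_mul_of_nonneg_left (by linarith) (by linarith)

/-! ### Regularly varying tails and products -/

theorem HasRegVarTail.tendsto {μ : Measure ℝ} {α : ℝ} (h : HasRegVarTail μ α) :
    (∀ᶠ x in atTop, 0 < μ.real (Ioi x)) ∧ ∀ c : ℝ, 0 < c →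
      Tendsto (fun x => μ.real (Ioi (c * x)) / μ.real (Ioi x)) atTop (𝓝 (c ^ (-α))) := by
  obtain ⟨L, hL, hLpos, hμ⟩ := h
  have heq : ∀ᶠ x in atTop, 0 < x ∧ 0 < L x ∧ μ.real (Ioi x) = x ^ (-α) * L x := by
    filter_upwards [hLpos, eventually_gt_atTop 0] with x hx hx0
    refine ⟨hx0, hx, ?_⟩
    rw [measureReal_def, hμ x hx0, ENNReal.toReal_ofReal (by positivity)]
  refine ⟨?_, fun c hc => ?_⟩
  · filter_upwards [heq] with x ⟨h0, h1, h2⟩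
    rw [h2]; positivity
  · have hcx : Tendsto (fun x : ℝ => c * x) atTop atTop := tendsto_id.const_mul_atTop hc
    have := (hL c hc).const_mul (c ^ (-α))
    rw [mul_one] at this
    refine this.congr' ?_
    filter_upwards [heq, hcx.eventually heq] with x ⟨h0, h1, h2⟩ ⟨_, _, h3⟩
    have : x ^ (-α) ≠ 0 := (Real.rpow_pos_of_pos h0 _).ne'
    rw [h2, h3, Real.mul_rpow hc.le h0.le]
    field_simp

theorem hasRegVarTail_of_tendsto {μ : Measure ℝ} [IsFiniteMeasure μ] {α : ℝ}
    (hpos : ∀ᶠ x in atTop, 0 < μ.real (Ioi x))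
    (h : ∀ c : ℝ, 0 < c →
      Tendsto (fun x => μ.real (Ioi (c * x)) / μ.real (Ioi x)) atTop (𝓝 (c ^ (-α)))) :
    HasRegVarTail μ α := by
  refine ⟨fun x => x ^ α * μ.real (Ioi x), fun c hc => ?_, ?_, fun x hx => ?_⟩
  · have := (h c hc).const_mul (c ^ α)
    rw [← Real.rpow_add hc, add_neg_cancel, Real.rpow_zero] at this
    refine this.congr' ?_
    filter_upwards [eventually_gt_atTop 0, hpos] with x hx hx2
    have : x ^ α ≠ 0 := (Real.rpow_pos_of_pos hx _).ne'
    rw [Real.mul_rpow hc.le hx.le]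
    field_simp
  · filter_upwards [eventually_gt_atTop 0, hpos] with x hx hx2
    positivity
  · rw [← mul_assoc, ← Real.rpow_add hx, neg_add_cancel, Real.rpow_zero, one_mul,
      ofReal_measureReal]

theorem tail_mul {Ω : Type*} [MeasurableSpace Ω] {P : Measure Ω} [IsProbabilityMeasure P]
    {Y Z : Ω → ℝ} (hY : Measurable Y) (hZ : Measurable Z) (hYZ : IndepFun Y Z P)
    (hpos : P.map Y (Iic 0) = 0) (x : ℝ) :
    (P.map (fun ω => Y ω * Z ω)).real (Ioi x)
      = ∫ y, (P.map Z).real (Ioi (x / y)) ∂(P.map Y) := by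
  have := Measure.isProbabilityMeasure_map (μ := P) hY.aemeasurable
  have := Measure.isProbabilityMeasure_map (μ := P) hZ.aemeasurable
  have hprod : P.map (fun ω => (Y ω, Z ω)) = (P.map Y).prod (P.map Z) :=
    (indepFun_iff_map_prod_eq_prod_map_map hY.aemeasurable hZ.aemeasurable).1 hYZ
  have hmul : Measurable fun q : ℝ × ℝ => q.1 * q.2 := by fun_prop
  have h1 : P.map (fun ω => Y ω * Z ω) (Ioi x)
      = ∫⁻ y, P.map Z (Ioi (x / y)) ∂(P.map Y) := by
    have : P.map (fun ω => Y ω * Z ω)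
        = ((P.map Y).prod (P.map Z)).map fun q : ℝ × ℝ => q.1 * q.2 := by
      rw [← hprod, Measure.map_map hmul (hY.prodMk hZ)]; rfl
    rw [this, Measure.map_apply hmul measurableSet_Ioi,
      Measure.prod_apply (hmul measurableSet_Ioi)]
    refine lintegral_congr_ae ?_
    have hae : ∀ᵐ y ∂(P.map Y), 0 < y := by
      rw [ae_iff]; simpa [Iic] using hpos
    filter_upwards [hae] with y hy
    congr 1
    ext z
    simp [div_lt_iff₀ hy, mul_comm]
  have hm : Measurable fun y => P.map Z (Ioi (x / y)) := by
    have : Antitone fun t => P.map Z (Ioi t) := fun a b hab => measure_mono (Ioi_subset_Ioi hab)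
    exact this.measurable.comp (by fun_prop)
  rw [measureReal_def, h1, ← integral_toReal hm.aemeasurable]
  · rfl
  · exact Eventually.of_forall fun y => measure_lt_top _ _

/-! ### Products with a dominating atom -/

/-- Corollary 4.9(i). Let `Y` be a positive random variable with law
`ν`, `E Y^{α+δ} < ∞` for some `δ > 0`, and `P(Y = x₀) > 0` for some `x₀ > 0`. If
`E[Y^α 1(Y ≠ x₀)] < x₀^α P(Y = x₀)`, then `Y` is `α`-regular variation determining. -/
theorem rvDetRV_of_dominating_atom
    (α : ℝ) (hα : 0 < α) (ν : Measure ℝ) [IsProbabilityMeasure ν] (hsupp : ν (Iic 0) = 0)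
    (hmom : ∃ δ : ℝ, 0 < δ ∧ ∫⁻ y in Ioi (0:ℝ), ENNReal.ofReal (y ^ (α + δ)) ∂ν < ⊤)
    (x₀ : ℝ) (hx₀ : 0 < x₀) (hatom : 0 < ν {x₀})
    (hlt : ∫⁻ y in Ioi (0:ℝ) \ {x₀}, ENNReal.ofReal (y ^ α) ∂ν
        < ν {x₀} * ENNReal.ofReal (x₀ ^ α)) :
    RVDetRV α ν := by
  obtain ⟨δ, hδ, hmomδ⟩ := hmom
  intro Ω _ P _ Y Z hY hZ hν hYZ hX
  have hZp := Measure.isProbabilityMeasure_map (μ := P) hZ.aemeasurable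
  have hXp := Measure.isProbabilityMeasure_map (μ := P) (hY.mul hZ).aemeasurable
  obtain ⟨hHev, hHrv⟩ := hX.tendsto
  set G : ℝ → ℝ := fun t => (P.map Z).real (Ioi t) with hGdef
  set H : ℝ → ℝ := fun t => (P.map fun ω => Y ω * Z ω).real (Ioi t) with hHdef
  have hGanti : Antitone G := fun a b hab => measureReal_mono (Ioi_subset_Ioi hab)
  have hHanti : Antitone H := fun a b hab => measureReal_mono (Ioi_subset_Ioi hab)
  have hG0 : ∀ t, 0 ≤ G t := fun t => measureReal_nonneg
  have hG1 : ∀ t, G t ≤ 1 := fun t => measureReal_le_one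
  have hH1 : ∀ t, H t ≤ 1 := fun t => measureReal_le_one
  have hHpos : ∀ t, 0 < H t := fun t => by
    obtain ⟨s, hs, hts⟩ := (hHev.and (eventually_ge_atTop t)).exists
    exact lt_of_lt_of_le hs (hHanti hts)
  have hGm : Measurable G := hGanti.measurable
  have hHm : Measurable H := hHanti.measurable
  have hdiv : ∀ t, 0 < t → Tendsto (fun x => H (x / t) / H x) atTop (𝓝 (t ^ α)) := fun t ht => by
    have := hHrv t⁻¹ (inv_pos.2 ht)
    rw [Real.inv_rpow ht.le, Real.rpow_neg ht.le, inv_inv] at this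
    simpa only [inv_mul_eq_div] using this
  obtain ⟨C, X, hpot⟩ := potter (β := α + δ) (by linarith) (by linarith) hHanti hHpos hH1
    (hdiv 2 two_pos)
  set p := ν.real {x₀} with hp
  have hp0 : 0 < p := ENNReal.toReal_pos hatom.ne' (measure_ne_top _ _)
  set S : Set ℝ := Ioi 0 \ {x₀} with hS
  have hSm : MeasurableSet S := measurableSet_Ioi.diff (measurableSet_singleton _)
  set μ := ν.restrict S with hμ
  have hae : ∀ᵐ y ∂μ, 0 < y := (ae_restrict_mem hSm).mono fun y hy => hy.1
  have hrestr : ν.restrict {x₀}ᶜ = μ := by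
    have h0 : ∀ᵐ y ∂ν, y ∈ Ioi (0 : ℝ) := by
      rw [ae_iff]; simpa [Iic] using hsupp
    refine Measure.restrict_congr_set ?_
    filter_upwards [h0] with y hy
    exact propext ⟨fun h => ⟨hy, h⟩, fun h => h.2⟩
  have hGint : ∀ x, Integrable (fun y => G (x / y)) ν := fun x =>
    Integrable.of_bound (hGm.comp (by fun_prop)).aestronglyMeasurable 1
      (Eventually.of_forall fun y => by
        rw [Real.norm_of_nonneg (hG0 _)]; exact hG1 _)
  have hsplit : ∀ x, H x = p * G (x / x₀) + ∫ y, G (x / y) ∂μ := fun x => by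
    have h := tail_mul hY hZ hYZ (by rw [hν]; exact hsupp) x
    rw [hν] at h
    rw [← hrestr]
    have h2 := integral_add_compl (measurableSet_singleton x₀) (hGint x)
    rw [integral_singleton, smul_eq_mul] at h2
    exact h.trans h2.symm
  have hratio : ∀ x y, 0 < y → x / (y / x₀) = x * (x₀ / y) := fun x y hy => by
    field_simp
  have hrpow_int : Integrable (fun y => (y / x₀) ^ (α + δ)) μ := by
    have h1 : Integrable (fun y => y ^ (α + δ)) μ := by
      refine ⟨(by fun_prop : Measurable fun y : ℝ => y ^ (α + δ)).aestronglyMeasurable, ?_⟩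
      rw [hasFiniteIntegral_iff_ofReal]
      · exact lt_of_le_of_lt (lintegral_mono' (Measure.restrict_mono sdiff_subset le_rfl) le_rfl)
          hmomδ
      · filter_upwards [hae] with y hy
        exact Real.rpow_nonneg hy.le _
    refine (h1.div_const (x₀ ^ (α + δ))).congr ?_
    filter_upwards [hae] with y hy
    rw [Real.div_rpow hy.le hx₀.le]
  have hw0 : 0 ≤ ∫ y, (y / x₀) ^ α ∂μ :=
    integral_nonneg_of_ae (hae.mono fun y hy => Real.rpow_nonneg (div_pos hy hx₀).le _)
  have hwp : ∫ y, (y / x₀) ^ α ∂μ < p := by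
    have h1 : ∫ y, (y / x₀) ^ α ∂μ = (∫ y, y ^ α ∂μ) / x₀ ^ α := by
      rw [← integral_div]
      refine integral_congr_ae ?_
      filter_upwards [hae] with y hy
      rw [Real.div_rpow hy.le hx₀.le]
    have h2 : ∫ y, y ^ α ∂μ = (∫⁻ y in S, ENNReal.ofReal (y ^ α) ∂ν).toReal := by
      refine integral_eq_lintegral_of_nonneg_ae ?_
        (by fun_prop : Measurable fun y : ℝ => y ^ α).aestronglyMeasurable
      filter_upwards [hae] with y hy
      exact Real.rpow_nonneg hy.le _
    have hxα : 0 < x₀ ^ α := Real.rpow_pos_of_pos hx₀ _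
    rw [h1, div_lt_iff₀ hxα, h2]
    have h3 := ENNReal.toReal_strict_mono
      (ENNReal.mul_ne_top (measure_ne_top _ _) ENNReal.ofReal_ne_top) hlt
    rwa [ENNReal.toReal_mul, ENNReal.toReal_ofReal hxα.le] at h3
  set g : ℝ → ℝ := fun x => G (x / x₀) / H x with hgdef
  have hI0 : ∀ x, 0 ≤ ∫ y, G (x / y) ∂μ := fun x => integral_nonneg fun y => hG0 _
  have hlim : Tendsto g atTop (𝓝 (p + ∫ y, (y / x₀) ^ α ∂μ)⁻¹) := by
    refine tendsto_of_renewal (τ := fun y => x₀ / y)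
      (r := fun x y => H (x * (x₀ / y)) / H x) (b := fun y => C * (1 + (y / x₀) ^ (α + δ)))
      (B := p⁻¹) (X := X) hp0 (hae.mono fun y hy => div_pos hx₀ hy) (by fun_prop)
      (by fun_prop) ?_ (fun x => by fun_prop)
      (fun x y => (div_pos (hHpos _) (hHpos _)).le) ?_
      (((integrable_const 1).add hrpow_int).const_mul C) ?_ hw0 hwp ?_
    · intro x _
      rw [abs_of_nonneg (div_nonneg (hG0 _) (hHpos _).le), div_le_iff₀ (hHpos x),
        inv_mul_eq_div, le_div_iff₀ hp0]
      linarith [hsplit x, hI0 x]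
    · intro x hx
      filter_upwards [hae] with y hy
      have := hpot x hx (y / x₀) (div_pos hy hx₀)
      rwa [hratio x y hy] at this
    · filter_upwards [hae] with y hy
      refine (hdiv (y / x₀) (div_pos hy hx₀)).congr fun x => ?_
      rw [hratio x y hy]
    · intro x _
      have h1 : ∫ y, g (x * (x₀ / y)) * (H (x * (x₀ / y)) / H x) ∂μ
          = (∫ y, G (x / y) ∂μ) / H x := by
        rw [← integral_div]
        refine integral_congr_ae ?_
        filter_upwards [hae] with y hy
        have h2 : x * (x₀ / y) / x₀ = x / y := by field_simp
        have := (hHpos (x * (x₀ / y))).ne'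
        simp only [hgdef, h2]
        rw [div_mul_div_cancel₀ this]
      rw [h1, hgdef, ← mul_div_assoc, ← add_div, ← hsplit x, div_self (hHpos x).ne']
  set l := (p + ∫ y, (y / x₀) ^ α ∂μ)⁻¹ with hl
  have hl0 : 0 < l := by positivity
  have hGg : ∀ x, G x = g (x₀ * x) * H (x₀ * x) := fun x => by
    simp only [hgdef]
    rw [mul_div_cancel_left₀ _ hx₀.ne', div_mul_cancel₀ _ (hHpos _).ne']
  have hx₀t : Tendsto (fun x : ℝ => x₀ * x) atTop atTop := tendsto_id.const_mul_atTop hx₀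
  refine hasRegVarTail_of_tendsto ?_ fun c hc => ?_
  · filter_upwards [(hlim.comp hx₀t).eventually_const_lt hl0] with x hx
    change 0 < G x
    rw [hGg]
    exact mul_pos hx (hHpos _)
  · change Tendsto (fun x => G (c * x) / G x) atTop _
    have hct : Tendsto (fun x : ℝ => c * (x₀ * x)) atTop atTop := hx₀t.const_mul_atTop hc
    have h1 := ((hlim.comp hct).div (hlim.comp hx₀t) hl0.ne').mul ((hHrv c hc).comp hx₀t)
    rw [div_self hl0.ne', one_mul] at h1
    refine h1.congr fun x => ?_
    simp only [Function.comp_apply, Pi.div_apply]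
    rw [hGg x, hGg (c * x), mul_left_comm x₀ c x, div_mul_div_comm]
end
end

section
/- Let Y be a positive random variable with EY^δ < ∞ for some δ > 0, independent of a random variable Z, and suppose the product X = YZ has a slowly varying right tail. Then Z has a slowly varying right tail and P(Z > x) ∼ P(X > x) as x → ∞. -/
/-!
Write `F x = P(YZ > x)` and `G x = P(Z > x)`.

*Upper bound.* For `b > 0`, independence gives `P(Y ≥ b) G(x) ≤ F(bx)`, and `F(bx) ∼ F(x)`. Hence
`limsup G/F ≤ 1 / P(Y ≥ b)`, which tends to `1` as `b ↓ 0` because `Y` is positive.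

*Lower bound.* Splitting on `Y ≤ M` or `Y > M` gives `F(Mx) ≤ G(x) + P(YZ > Mx, Y > M)`. A Potter
bound `F(x/y) ≤ C y^δ F(x)` (`potter`), valid for all `y ≥ 1` and large `x`, transfers to `G` through
the upper bound, so that the last term is at most `K E[Y^δ; Y > M] F(Mx)` (`tail_part_le`). Since
`E Y^δ < ∞`, the factor in front of `F(Mx)` is small for large `M`, and `F(Mx) ∼ F(x)` yields
`liminf G/F ≥ 1`.

Slow variation of `G` then follows from that of `F` and `G ∼ F`.
-/

open MeasureTheory Set Filter ProbabilityTheory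
open scoped ENNReal Topology

noncomputable section

/-- Potter's bound for a nonincreasing slowly varying function with values in `(0, 1]`. Monotonicity
and boundedness make it hold for all `y ≥ 1`, even when `x / y` is small. -/
lemma potter_s17 {F : ℝ → ℝ} (hanti : Antitone F) (hle : ∀ x, F x ≤ 1) (hpos : ∀ x, 0 < F x)
    (hsv : SlowlyVarying F) {δ : ℝ} (hδ : 0 < δ) :
    ∃ C : ℝ, 0 < C ∧ ∃ x₀ : ℝ, 0 < x₀ ∧ ∀ x, x₀ ≤ x → ∀ y, 1 ≤ y →
      F (x / y) ≤ C * y ^ δ * F x := by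
  have h2 : (1 : ℝ) < 2 ^ δ := Real.one_lt_rpow (by norm_num) hδ
  have hev := ((hsv (1 / 2) (by norm_num)).eventually (gt_mem_nhds h2)).and
    (eventually_ge_atTop (1 : ℝ))
  obtain ⟨x₀, hx₀⟩ := eventually_atTop.1 hev
  have hx₀1 : 1 ≤ x₀ := (hx₀ x₀ le_rfl).2
  have hstep : ∀ x, x₀ ≤ x → F (x / 2) ≤ 2 ^ δ * F x := by
    intro x hx
    have := (hx₀ x hx).1
    rw [div_lt_iff₀ (hpos x)] at this
    rw [show x / 2 = 1 / 2 * x by ring]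
    exact this.le
  set C := (F (2 * x₀))⁻¹ with hC
  have hCpos : 0 < C := inv_pos.2 (hpos _)
  -- For `x ≤ 2 x₀` the trivial bound `F ≤ 1` suffices.
  have hsmall : ∀ x u, x ≤ 2 * x₀ → F u ≤ C * F x := by
    intro x u hx
    refine (hle u).trans ?_
    rw [hC, ← div_eq_inv_mul, le_div_iff₀ (hpos _), one_mul]
    exact hanti hx
  have hC1 : 1 ≤ C := (one_le_inv₀ (hpos _)).2 (hle _)
  have hpow : ∀ n : ℕ, ∀ x, x₀ ≤ x → F (x / 2 ^ n) ≤ C * (2 ^ δ) ^ n * F x := by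
    intro n
    induction n with
    | zero =>
      intro x hx
      simp only [pow_zero, div_one, mul_one]
      nlinarith [hpos x]
    | succ n ih =>
      intro x hx
      rcases le_total x (2 * x₀) with h | h
      · refine (hsmall x _ h).trans ?_
        have h1 : (1 : ℝ) ≤ (2 ^ δ) ^ (n + 1) := one_le_pow₀ h2.le
        have := mul_pos hCpos (hpos x)
        nlinarith
      · have h' := ih (x / 2) (by linarith)
        rw [show x / 2 ^ (n + 1) = x / 2 / 2 ^ n by rw [pow_succ]; field_simp]
        refine h'.trans ?_
        calc C * (2 ^ δ) ^ n * F (x / 2) ≤ C * (2 ^ δ) ^ n * (2 ^ δ * F x) := by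
              gcongr
              exact hstep x hx
          _ = _ := by ring
  refine ⟨C * 2 ^ δ, by positivity, x₀, by linarith, fun x hx y hy => ?_⟩
  obtain ⟨n, hn1, hn2⟩ := exists_nat_pow_near hy (by norm_num : (1 : ℝ) < 2)
  calc F (x / y) ≤ F (x / 2 ^ (n + 1)) := by
        apply hanti
        gcongr
        linarith
    _ ≤ C * (2 ^ δ) ^ (n + 1) * F x := hpow _ x hx
    _ ≤ C * 2 ^ δ * y ^ δ * F x := by
        have : ((2 : ℝ) ^ δ) ^ n ≤ y ^ δ := by
          rw [← Real.rpow_natCast, ← Real.rpow_mul (by norm_num), mul_comm, Real.rpow_mul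
            (by norm_num), Real.rpow_natCast]
          exact Real.rpow_le_rpow (by positivity) hn1 hδ.le
        rw [pow_succ, mul_comm ((2 ^ δ) ^ n), ← mul_assoc]
        have := hpos x
        gcongr

section Probability

variable {Ω : Type*} [MeasurableSpace Ω] {P : Measure Ω} [IsProbabilityMeasure P]
  {Y Z : Ω → ℝ}

lemma upper_bound (hindep : IndepFun Y Z P)
    {b x : ℝ} (hb : 0 < b) (hx : 0 ≤ x) :
    P.real {ω | b ≤ Y ω} * P.real {ω | x < Z ω} ≤ P.real {ω | b * x < Y ω * Z ω} := by
  have h := hindep.measure_inter_preimage_eq_mul (Ici b) (Ioi x) measurableSet_Ici measurableSet_Ioi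
  have h' : P.real (Y ⁻¹' Ici b ∩ Z ⁻¹' Ioi x) = P.real {ω | b ≤ Y ω} * P.real {ω | x < Z ω} := by
    simp only [Measure.real, h, ENNReal.toReal_mul]
    rfl
  rw [← h']
  refine measureReal_mono ?_
  rintro ω ⟨h1, h2⟩
  simp only [mem_preimage, mem_Ici, mem_Ioi] at h1 h2
  simp only [mem_ofPred_eq]
  nlinarith

lemma exists_lower_level (hpos : ∀ ω, 0 < Y ω) {a : ℝ} (ha : a < 1) :
    ∃ b : ℝ, 0 < b ∧ b ≤ 1 ∧ a < P.real {ω | b ≤ Y ω} := by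
  have hmono : Monotone fun n : ℕ => {ω | 1 / ((n : ℝ) + 1) ≤ Y ω} := by
    intro m n hmn ω h
    simp only [mem_ofPred_eq] at h ⊢
    exact (Nat.one_div_le_one_div hmn).trans h
  have hU : (⋃ n : ℕ, {ω | 1 / ((n : ℝ) + 1) ≤ Y ω}) = univ := by
    refine eq_univ_of_forall fun ω => mem_iUnion.2 ?_
    obtain ⟨n, hn⟩ := exists_nat_one_div_lt (hpos ω)
    exact ⟨n, hn.le⟩
  have h := tendsto_measure_iUnion_atTop (μ := P) hmono
  rw [hU, measure_univ] at h
  have h2 := (ENNReal.tendsto_toReal ENNReal.one_ne_top).comp h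
  obtain ⟨n, hn⟩ := (h2.eventually (lt_mem_nhds (by simpa using ha))).exists
  refine ⟨1 / ((n : ℝ) + 1), by positivity, ?_, hn⟩
  rw [div_le_one (by positivity)]
  have : (0 : ℝ) ≤ n := n.cast_nonneg
  linarith

/-- Uniform integrability of the single random variable `Y ^ δ`. -/
lemma exists_upper_level (hY : Measurable Y) {δ : ℝ}
    (hmom : ∫⁻ ω, ENNReal.ofReal (Y ω ^ δ) ∂P < ⊤) {ε : ℝ} (hε : 0 < ε) :
    ∃ M : ℝ, 1 ≤ M ∧ ∫⁻ ω in {ω | M < Y ω}, ENNReal.ofReal (Y ω ^ δ) ∂P < ENNReal.ofReal ε := by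
  have hanti : Antitone fun n : ℕ => {ω | (n : ℝ) < Y ω} := by
    intro m n hmn ω h
    simp only [mem_ofPred_eq] at h ⊢
    exact lt_of_le_of_lt (Nat.cast_le.2 hmn) h
  have hI : (⋂ n : ℕ, {ω | (n : ℝ) < Y ω}) = ∅ := by
    refine eq_empty_of_forall_notMem fun ω h => ?_
    obtain ⟨n, hn⟩ := exists_nat_ge (Y ω)
    exact absurd (mem_iInter.1 h n) (not_lt.2 hn)
  have h := tendsto_measure_iInter_atTop (μ := P)
    (fun n => (measurableSet_lt measurable_const hY).nullMeasurableSet) hanti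
    ⟨0, measure_ne_top _ _⟩
  rw [hI, measure_empty] at h
  have h2 := tendsto_setLIntegral_zero hmom.ne h
  obtain ⟨n, hn, hn1⟩ := ((h2.eventually (gt_mem_nhds (ENNReal.ofReal_pos.2 hε))).and
    (eventually_ge_atTop 1)).exists
  exact ⟨n, by exact_mod_cast hn1, hn⟩

/-- Conditioning on `Y`, a pointwise bound `P(Z > x / y) ≤ K y^δ` integrates to a bound on
`P(YZ > x, Y > M)`. -/
lemma tail_part_le (hY : Measurable Y) (hZ : Measurable Z) (hindep : IndepFun Y Z P)
    {δ x M K ε : ℝ} (hM : 1 ≤ M) (hK : 0 ≤ K) (hε : 0 ≤ ε)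
    (hb : ∀ y, 1 ≤ y → P.real {ω | x / y < Z ω} ≤ K * y ^ δ)
    (hM' : ∫⁻ ω in {ω | M < Y ω}, ENNReal.ofReal (Y ω ^ δ) ∂P ≤ ENNReal.ofReal ε) :
    P.real {ω | M < Y ω ∧ x < Y ω * Z ω} ≤ K * ε := by
  have hS : MeasurableSet {p : ℝ × ℝ | M < p.1 ∧ x < p.1 * p.2} :=
    (measurableSet_lt measurable_const measurable_fst).inter
      (measurableSet_lt measurable_const (measurable_fst.mul measurable_snd))
  have hprod := (indepFun_iff_map_prod_eq_prod_map_map hY.aemeasurable hZ.aemeasurable).1 hindep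
  have key : P {ω | M < Y ω ∧ x < Y ω * Z ω} ≤ ENNReal.ofReal (K * ε) := by
    calc P {ω | M < Y ω ∧ x < Y ω * Z ω}
        = (P.map fun ω => (Y ω, Z ω)) {p : ℝ × ℝ | M < p.1 ∧ x < p.1 * p.2} := by
          rw [Measure.map_apply (hY.prodMk hZ) hS]; rfl
      _ = ∫⁻ y, (P.map Z) (Prod.mk y ⁻¹' {p : ℝ × ℝ | M < p.1 ∧ x < p.1 * p.2}) ∂(P.map Y) := by
          rw [hprod, Measure.prod_apply hS]
      _ ≤ ∫⁻ y, (Ioi M).indicator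
            (fun y => ENNReal.ofReal K * ENNReal.ofReal (y ^ δ)) y ∂(P.map Y) := by
          refine lintegral_mono fun y => ?_
          by_cases hy : M < y
          · have hy0 : 0 < y := by linarith
            rw [indicator_of_mem (mem_Ioi.2 hy), Measure.map_apply hZ (measurable_prodMk_left hS),
              ← ENNReal.ofReal_mul hK]
            have : Z ⁻¹' (Prod.mk y ⁻¹' {p : ℝ × ℝ | M < p.1 ∧ x < p.1 * p.2})
                = {ω | x / y < Z ω} := by
              ext ω
              simp [hy, div_lt_iff₀' hy0]
            rw [this, ← ofReal_measureReal]
            exact ENNReal.ofReal_le_ofReal (hb y (by linarith))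
          · have : Prod.mk y ⁻¹' {p : ℝ × ℝ | M < p.1 ∧ x < p.1 * p.2} = ∅ := by
              ext z
              simp [hy]
            simp [this]
      _ = ∫⁻ y in Ioi M, ENNReal.ofReal K * ENNReal.ofReal (y ^ δ) ∂(P.map Y) :=
          lintegral_indicator measurableSet_Ioi _
      _ = ∫⁻ ω in {ω | M < Y ω}, ENNReal.ofReal K * ENNReal.ofReal (Y ω ^ δ) ∂P := by
          rw [setLIntegral_map measurableSet_Ioi (by fun_prop) hY]
          rfl
      _ = ENNReal.ofReal K * ∫⁻ ω in {ω | M < Y ω}, ENNReal.ofReal (Y ω ^ δ) ∂P :=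
          lintegral_const_mul _ (by fun_prop)
      _ ≤ ENNReal.ofReal K * ENNReal.ofReal ε := by gcongr
      _ = ENNReal.ofReal (K * ε) := (ENNReal.ofReal_mul hK).symm
  exact ENNReal.toReal_le_of_le_ofReal (by positivity) key

lemma tail_ratio (hY : Measurable Y) (hZ : Measurable Z) (hpos : ∀ ω, 0 < Y ω)
    {δ : ℝ} (hδ : 0 < δ) (hmom : ∫⁻ ω, ENNReal.ofReal (Y ω ^ δ) ∂P < ⊤)
    (hindep : IndepFun Y Z P)
    (hF0 : ∀ x, 0 < P.real {ω | x < Y ω * Z ω})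
    (hsv : SlowlyVarying fun x => P.real {ω | x < Y ω * Z ω}) :
    Tendsto (fun x : ℝ => P.real {ω | x < Z ω} / P.real {ω | x < Y ω * Z ω}) atTop (𝓝 1) := by
  set F : ℝ → ℝ := fun x => P.real {ω | x < Y ω * Z ω} with hF
  set G : ℝ → ℝ := fun x => P.real {ω | x < Z ω} with hG
  have hanti : Antitone F := fun x y hxy =>
    measureReal_mono fun ω h => lt_of_le_of_lt hxy h
  have hub : ∀ b x : ℝ, 0 < b → 0 ≤ x → P.real {ω | b ≤ Y ω} * G x ≤ F (b * x) :=
    fun b x hb hx => upper_bound hindep hb hx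
  refine tendsto_order.2 ⟨fun a ha => ?_, fun a ha => ?_⟩
  · obtain ⟨C, hC, x₀, hx₀, hpot⟩ := potter_s17 hanti (fun x => measureReal_le_one) hF0 hsv hδ
    obtain ⟨b, hb0, hb1, hbp⟩ := exists_lower_level (P := P) hpos (zero_lt_one)
    set p := P.real {ω | b ≤ Y ω} with hp
    set K := C * b⁻¹ ^ δ / p with hK
    have hKpos : 0 < K := by positivity
    have hGpot : ∀ x, x₀ ≤ x → ∀ y, 1 ≤ y → G (x / y) ≤ K * F x * y ^ δ := by
      intro x hx y hy
      have hx0 : 0 < x := by linarith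
      have hy0 : 0 < y := by linarith
      have h1 := hub b (x / y) hb0 (by positivity)
      have h2 := hpot x hx (b⁻¹ * y)
        (one_le_mul_of_one_le_of_one_le ((one_le_inv₀ hb0).2 hb1) hy)
      rw [show x / (b⁻¹ * y) = b * (x / y) by field_simp,
        Real.mul_rpow (by positivity) hy0.le] at h2
      have h3 := h1.trans h2
      rw [← le_div_iff₀' hbp] at h3
      refine h3.trans (le_of_eq ?_)
      rw [hK]; ring
    -- `ε` is chosen so that `K ε = (1 - a) / 2`, whence `a < 1 - K ε`.
    have hεpos : 0 < (1 - a) / 2 / K := by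
      have : 0 < 1 - a := by linarith
      positivity
    obtain ⟨M, hM1, hM⟩ := exists_upper_level (P := P) hY hmom hεpos
    have hM0 : 0 < M := by linarith
    have hlow : ∀ x, x₀ ≤ x → F (M * x) ≤ G x + (1 - a) / 2 * F (M * x) := by
      intro x hx
      have hx0 : 0 < x := by linarith
      have hMx : x₀ ≤ M * x := by nlinarith
      have h1 := tail_part_le (K := K * F (M * x)) hY hZ hindep hM1
        (mul_nonneg hKpos.le (hF0 _).le) hεpos.le (hGpot _ hMx) hM.le
      have h2 : F (M * x) ≤ G x + P.real {ω | M < Y ω ∧ M * x < Y ω * Z ω} := by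
        refine le_trans (measureReal_mono ?_) (measureReal_union_le _ _)
        intro ω h
        by_cases hy : M < Y ω
        · exact Or.inr ⟨hy, h⟩
        · left
          simp only [mem_ofPred_eq] at h ⊢
          have := hpos ω
          by_contra hz
          push Not at hz hy
          nlinarith [mul_le_mul_of_nonneg_left hz this.le, mul_le_mul_of_nonneg_right hy hx0.le]
      have h3 : K * F (M * x) * ((1 - a) / 2 / K) = (1 - a) / 2 * F (M * x) := by
        field_simp
      linarith
    have hlim : Tendsto (fun x => (1 - (1 - a) / 2) * (F (M * x) / F x)) atTop
        (𝓝 ((1 - (1 - a) / 2) * 1)) := (hsv M hM0).const_mul _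
    filter_upwards [hlim.eventually (lt_mem_nhds (show a < _ by linarith)),
      eventually_ge_atTop x₀] with x h1 h2
    refine h1.trans_le ?_
    rw [← mul_div_assoc]
    have := hF0 x
    gcongr
    linarith [hlow x h2]
  · have ha0 : 0 < a := by linarith
    obtain ⟨b, hb0, -, hbp⟩ := exists_lower_level (P := P) hpos (inv_lt_one_of_one_lt₀ ha)
    have hp0 : 0 < P.real {ω | b ≤ Y ω} := (inv_pos.2 ha0).trans hbp
    have hlim := (hsv b hb0).const_mul (P.real {ω | b ≤ Y ω})⁻¹
    rw [mul_one] at hlim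
    filter_upwards [hlim.eventually (gt_mem_nhds (inv_lt_of_inv_lt₀ ha0 hbp)),
      eventually_ge_atTop 0] with x h1 h2
    refine lt_of_le_of_lt ?_ h1
    have := hF0 x
    rw [← mul_div_assoc]
    gcongr
    rw [← div_eq_inv_mul, le_div_iff₀' hp0]
    exact hub b x hb0 h2

end Probability

/-- Proposition 4.11. Let `Y` be a positive random variable with
`E Y^δ < ∞` for some `δ > 0`, independent of a random variable `Z`, and suppose the
product `X = Y Z` has a slowly varying right tail. Then `Z` has a slowly varying right
tail and `P(Z > x) ∼ P(X > x)` as `x → ∞`. -/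
theorem slowVar_factor_of_slowVar_product
    (Ω : Type*) [MeasurableSpace Ω] (P : Measure Ω) [IsProbabilityMeasure P]
    (Y Z : Ω → ℝ) (hY : Measurable Y) (hZ : Measurable Z) (hpos : ∀ ω, 0 < Y ω)
    (hmom : ∃ δ : ℝ, 0 < δ ∧ ∫⁻ ω, ENNReal.ofReal (Y ω ^ δ) ∂P < ⊤)
    (hindep : IndepFun Y Z P)
    (hX : HasRegVarTail (P.map (fun ω => Y ω * Z ω)) 0) :
    HasRegVarTail (P.map Z) 0 ∧
      Tendsto (fun x : ℝ => (P {ω | x < Z ω}).toReal /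
          (P {ω | x < Y ω * Z ω}).toReal) atTop (nhds 1) := by
  obtain ⟨δ, hδ, hmom⟩ := hmom
  obtain ⟨L, hL, hLpos, hLeq⟩ := hX
  set F : ℝ → ℝ := fun x => P.real {ω | x < Y ω * Z ω} with hF
  set G : ℝ → ℝ := fun x => P.real {ω | x < Z ω} with hG
  have hFL : ∀ᶠ x in atTop, F x = L x := by
    filter_upwards [hLpos, eventually_gt_atTop 0] with x h1 h2
    have h := hLeq x h2
    rw [Measure.map_apply (show Measurable fun ω => Y ω * Z ω from hY.mul hZ) measurableSet_Ioi, neg_zero, Real.rpow_zero, one_mul] at h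
    rw [← ENNReal.toReal_ofReal h1.le, ← h]
    rfl
  have hanti : Antitone F := fun x y hxy =>
    measureReal_mono fun ω h => lt_of_le_of_lt hxy h
  have hF0 : ∀ x, 0 < F x := by
    intro x
    obtain ⟨y, h1, h2, h3⟩ := (hFL.and (hLpos.and (eventually_ge_atTop x))).exists
    exact lt_of_lt_of_le (h1 ▸ h2) (hanti h3)
  have hsv : SlowlyVarying F := by
    intro c hc
    refine (hL c hc).congr' ?_
    filter_upwards [hFL, (tendsto_id.const_mul_atTop hc).eventually hFL] with x h1 h2
    simp only [id] at h2
    rw [h1, h2]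
  have hlim : Tendsto (fun x => G x / F x) atTop (𝓝 1) :=
    tail_ratio hY hZ hpos hδ hmom hindep hF0 hsv
  have hGpos : ∀ᶠ x in atTop, 0 < G x := by
    filter_upwards [hlim.eventually (lt_mem_nhds one_pos)] with x hx
    exact (div_pos_iff_of_pos_right (hF0 x)).1 hx
  refine ⟨⟨G, ?_, hGpos, ?_⟩, hlim⟩
  · intro c hc
    have h := ((hlim.comp (tendsto_id.const_mul_atTop hc)).mul (hsv c hc)).div hlim one_ne_zero
    simp only [mul_one, div_one] at h
    refine h.congr' ?_
    filter_upwards [hGpos] with x hx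
    have h1 := (hF0 x).ne'
    have h2 := (hF0 (c * x)).ne'
    simp only [Function.comp, id, Pi.div_apply]
    field_simp
  · intro x _
    rw [Measure.map_apply hZ measurableSet_Ioi, neg_zero, Real.rpow_zero, one_mul, hG,
      ofReal_measureReal]
    rfl
end
end
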